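/- arXiv:1903.09357 — 8 statements merged into one kernel-verified Lean document; each statement's English description precedes it below -/
import Mathlib

section
/- Let ℓ, k ≥ 1 and let a_1,…,a_ℓ, n_1,…,n_ℓ, c_1,…,c_k be positive integers such that gcd(a_i, a_j) = 1 for all i ≠ j and for each i ∈ {1,…,ℓ} there exists r ∈ {1,…,k} with gcd(a_i, c_r n_i) = 1. Set α = lcm(a_1,…,a_ℓ), m_i = n_i α / a_i for i = 1,…,ℓ, and β = m_1 + ⋯ + m_ℓ. Then gcd(α, c_1 β, c_2 β, …, c_k β) = 1. -/
/-- If the Type II_k weight matrix is faithful, then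
`gcd(α, c_1 β, …, c_k β) = 1`, where `α = lcm(a_1,…,a_ℓ)`, `m_i = n_i α / a_i`,
`β = m_1 + ⋯ + m_ℓ`. -/
theorem stmt1 (ℓ k : ℕ) (hℓ : 1 ≤ ℓ) (hk : 1 ≤ k)
    (a n : Fin ℓ → ℕ) (c : Fin k → ℕ)
    (ha : ∀ i, 0 < a i) (hn : ∀ i, 0 < n i) (hc : ∀ r, 0 < c r)
    (hF1 : ∀ i j, i ≠ j → Nat.gcd (a i) (a j) = 1)
    (hF2 : ∀ i, ∃ r, Nat.gcd (a i) (c r * n i) = 1) :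
    Nat.gcd (Finset.univ.lcm a)
      (Finset.univ.gcd fun r : Fin k =>
        c r * ∑ i, n i * Finset.univ.lcm a / a i) = 1 := by
  have hdvd : ∀ i, a i ∣ Finset.univ.lcm a := fun i => Finset.dvd_lcm (Finset.mem_univ i)
  have hprod : Finset.univ.lcm a ∣ ∏ i, a i :=
    Finset.lcm_dvd fun i hi => Finset.dvd_prod_of_mem a hi
  generalize Finset.univ.lcm a = A at *
  choose q hq using hdvd
  have hm : ∀ i, n i * A / a i = n i * q i := by
    intro i
    have h : n i * A = a i * (n i * q i) := by
      conv_lhs => rw [hq i]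
      ring
    rw [h, Nat.mul_div_cancel_left _ (ha i)]
  simp only [hm]
  by_contra hne
  obtain ⟨p, hp, hpd⟩ := Nat.exists_prime_and_dvd hne
  have hpA := hpd.trans (Nat.gcd_dvd_left _ _)
  have hpG := hpd.trans (Nat.gcd_dvd_right _ _)
  obtain ⟨i, -, hi⟩ := (hp.prime.dvd_finset_prod_iff _).1 (hpA.trans hprod)
  obtain ⟨r, hr⟩ := hF2 i
  have hpr : p ∣ c r * ∑ i, n i * q i :=
    hpG.trans (Finset.gcd_dvd (f := fun r : Fin k => c r * ∑ i, n i * q i) (Finset.mem_univ r))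
  have hnot : ¬ p ∣ c r * n i := fun h => by
    have h2 := Nat.dvd_gcd hi h
    rw [hr] at h2
    exact hp.one_lt.ne' (Nat.dvd_one.1 h2)
  have hsum : p ∣ ∑ i, n i * q i :=
    (hp.dvd_mul.1 hpr).resolve_left fun h => hnot (h.mul_right _)
  rw [← Finset.add_sum_erase _ _ (Finset.mem_univ i)] at hsum
  have hrest : p ∣ ∑ j ∈ Finset.univ.erase i, n j * q j := by
    refine Finset.dvd_sum fun j hj => Dvd.dvd.mul_left (hi.trans ?_) _
    have hij : i ≠ j := (Finset.ne_of_mem_erase hj).symm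
    have h1 : a i ∣ a j * q j := by
      rw [← hq j]
      exact ⟨q i, hq i⟩
    exact Nat.Coprime.dvd_of_dvd_mul_left (hF1 i j hij) h1
  have hpi : p ∣ n i * q i := (Nat.dvd_add_left hrest).1 hsum
  have hpq : p ∣ q i := (hp.dvd_mul.1 hpi).resolve_left fun h => hnot (h.mul_left _)
  rw [hq i, ← Finset.mul_prod_erase _ _ (Finset.mem_univ i)] at hprod
  have hqd := Nat.dvd_of_mul_dvd_mul_left (ha i) hprod
  obtain ⟨j, hj, hpj⟩ := (hp.prime.dvd_finset_prod_iff _).1 (hpq.trans hqd)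
  have h2 := Nat.dvd_gcd hi hpj
  rw [hF1 i j (Finset.ne_of_mem_erase hj).symm] at h2
  exact hp.one_lt.ne' (Nat.dvd_one.1 h2)
end

section
/- The linear map φ : ℂ^{k+1} → ℂ^{ℓ+k} defined by (φz)_i = √(m_i/β)·z_1 for i = 1,…,ℓ and (φz)_{ℓ+r} = z_{1+r} for r = 1,…,k preserves the standard symplectic form, i.e. Im⟨φz, φz′⟩ = Im⟨z, z′⟩ for all z, z′ (where ⟨x, y⟩ = Σ_j x_j·conj(y_j) is the standard hermitian inner product), and φ maps the shell Z_B into the shell Z_A: if −α|z_1|² + β·Σ_{r=1}^k c_r|z_{1+r}|² = 0, then −a_i|(φz)_i|² + n_i·Σ_{r=1}^k c_r|(φz)_{ℓ+r}|² = 0 for every i = 1,…,ℓ. -/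
open Complex ComplexConjugate

/-- The embedding `φ : ℂ^{k+1} → ℂ^{ℓ+k}`, with `ℂ^{k+1}` represented as
`ℂ × (Fin k → ℂ)` (first coordinate `z_1`) and `ℂ^{ℓ+k}` as
`(Fin ℓ → ℂ) × (Fin k → ℂ)`. -/
noncomputable def phiMap (ℓ k : ℕ) (m : Fin ℓ → ℕ) (β : ℕ)
    (z : ℂ × (Fin k → ℂ)) : (Fin ℓ → ℂ) × (Fin k → ℂ) :=
  (fun i => (Real.sqrt ((m i : ℝ) / (β : ℝ)) : ℂ) * z.1, z.2)

/-- `φ` preserves the imaginary part of the hermitian inner product and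
maps the shell `Z_B` into the shell `Z_A`. -/
theorem stmt2 (ℓ k : ℕ) (hℓ : 1 ≤ ℓ) (hk : 1 ≤ k)
    (a n : Fin ℓ → ℕ) (c : Fin k → ℕ)
    (ha : ∀ i, 0 < a i) (hn : ∀ i, 0 < n i) (hc : ∀ r, 0 < c r) :
    let α : ℕ := Finset.univ.lcm a
    let m : Fin ℓ → ℕ := fun i => n i * α / a i
    let β : ℕ := ∑ i, m i
    -- φ preserves the standard symplectic form Im⟨·,·⟩
    (∀ z z' : ℂ × (Fin k → ℂ),
        (∑ i, (phiMap ℓ k m β z).1 i * conj ((phiMap ℓ k m β z').1 i)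
          + ∑ r, (phiMap ℓ k m β z).2 r * conj ((phiMap ℓ k m β z').2 r)).im
        = (z.1 * conj z'.1 + ∑ r, z.2 r * conj (z'.2 r)).im)
    ∧
    -- φ maps the shell Z_B into the shell Z_A
    (∀ z : ℂ × (Fin k → ℂ),
        -(α : ℝ) * normSq z.1 + (β : ℝ) * ∑ r, (c r : ℝ) * normSq (z.2 r) = 0 →
        ∀ i, -(a i : ℝ) * normSq ((phiMap ℓ k m β z).1 i)
          + (n i : ℝ) * ∑ r, (c r : ℝ) * normSq ((phiMap ℓ k m β z).2 r) = 0) := by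
  intro α m β
  have hα : 0 < α := by
    apply Nat.pos_of_ne_zero
    intro h
    obtain ⟨i, -, hi⟩ := Finset.lcm_eq_zero_iff.mp h
    exact (ha i).ne' hi
  have hdvd : ∀ i, a i ∣ n i * α := fun i =>
    Dvd.dvd.mul_left (Finset.dvd_lcm (Finset.mem_univ i)) _
  have hm : ∀ i, a i * m i = n i * α := fun i => Nat.mul_div_cancel' (hdvd i)
  have hmpos : ∀ i, 0 < m i := fun i =>
    Nat.pos_of_mul_pos_left (a := a i) (by rw [hm i]; exact Nat.mul_pos (hn i) hα)
  have hβ : 0 < β := Finset.sum_pos (fun i _ => hmpos i) ⟨⟨0, hℓ⟩, Finset.mem_univ _⟩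
  have hβR : (β : ℝ) ≠ 0 := by exact_mod_cast hβ.ne'
  have hsq : ∀ i, Real.sqrt ((m i : ℝ) / (β : ℝ)) * Real.sqrt ((m i : ℝ) / (β : ℝ))
      = (m i : ℝ) / (β : ℝ) := fun i => Real.mul_self_sqrt (by positivity)
  have hsum : ∑ i, (m i : ℝ) / (β : ℝ) = 1 := by
    rw [← Finset.sum_div, ← Nat.cast_sum]
    exact div_self hβR
  clear_value β m α
  refine ⟨fun z z' => ?_, fun z hz i => ?_⟩
  · have h1 : ∑ i, (phiMap ℓ k m β z).1 i * conj ((phiMap ℓ k m β z').1 i)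
        = z.1 * conj z'.1 := by
      have h2 : ∀ i, (phiMap ℓ k m β z).1 i * conj ((phiMap ℓ k m β z').1 i)
          = (((m i : ℝ) / (β : ℝ) : ℝ) : ℂ) * (z.1 * conj z'.1) := by
        intro i
        rw [← hsq i]
        simp only [phiMap, map_mul, Complex.conj_ofReal, Complex.ofReal_mul]
        ring
      rw [Finset.sum_congr rfl (fun i _ => h2 i), ← Finset.sum_mul, ← Complex.ofReal_sum, hsum]
      simp
    rw [h1]
    rfl
  · have hmi : (a i : ℝ) * m i = n i * α := by exact_mod_cast hm i
    simp only [phiMap, map_mul, Complex.normSq_ofReal, hsq]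
    generalize ∑ r, (c r : ℝ) * normSq (z.2 r) = S at hz
    field_simp
    linear_combination (n i : ℝ) * hz - normSq z.1 * hmi
end

section
/- For every t ∈ ℂ with |t| = 1 and every z ∈ ℂ^{k+1}, the map φ intertwines the two circle actions: φ(t·z) = (t^{α/a_1}, t^{α/a_2}, …, t^{α/a_ℓ})·φ(z), where t·z denotes the T^1-action (t·z)_1 = t^{−α} z_1, (t·z)_{1+r} = t^{c_r β} z_{1+r}, and the right-hand side uses the T^ℓ-action on ℂ^{ℓ+k} with weight matrix A. In particular φ maps T^1-orbits into T^ℓ-orbits. -/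
open Complex

/-- for `t` in the unit circle, `φ(t·z) = (t^{α/a_1},…,t^{α/a_ℓ})·φ(z)`,
where `t·z` is the `T¹`-action `(t^{-α} z_1, t^{c_r β} z_{1+r})` and the right-hand side
is the `T^ℓ`-action on `ℂ^{ℓ+k}` with weight matrix `A`. -/
theorem stmt6 (ℓ k : ℕ) (hℓ : 1 ≤ ℓ) (hk : 1 ≤ k)
    (a n : Fin ℓ → ℕ) (c : Fin k → ℕ)
    (ha : ∀ i, 0 < a i) (hn : ∀ i, 0 < n i) (hc : ∀ r, 0 < c r) :
    let α : ℕ := Finset.univ.lcm a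
    let m : Fin ℓ → ℕ := fun i => n i * α / a i
    let β : ℕ := ∑ i, m i
    ∀ t : ℂ, ‖t‖ = 1 → ∀ z : ℂ × (Fin k → ℂ),
      phiMap ℓ k m β (t ^ (-(α : ℤ)) * z.1, fun r => t ^ (c r * β) * z.2 r)
        = (fun i => (t ^ (α / a i)) ^ (-(a i : ℤ)) * (phiMap ℓ k m β z).1 i,
           fun r => (∏ i, (t ^ (α / a i)) ^ (c r * n i)) * (phiMap ℓ k m β z).2 r) := by
  intro α m β t _ z
  have hd : ∀ i, a i ∣ α := fun i => Finset.dvd_lcm (Finset.mem_univ i)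
  refine Prod.ext (funext fun i => ?_) (funext fun r => ?_)
  · have h : (t ^ (α / a i)) ^ (-(a i : ℤ)) = t ^ (-(α : ℤ)) := by
      rw [zpow_neg, zpow_neg, zpow_natCast, zpow_natCast, ← pow_mul,
        Nat.div_mul_cancel (hd i)]
    simp only [phiMap]
    rw [h]
    ring
  · have h : ∏ i, (t ^ (α / a i)) ^ (c r * n i) = t ^ (c r * β) := by
      simp only [← pow_mul]
      rw [Finset.prod_pow_eq_pow_sum]
      congr 1
      simp only [β, m, Finset.mul_sum]
      refine Finset.sum_congr rfl fun i _ => ?_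
      rw [Nat.mul_div_assoc _ (hd i)]
      ring
    simp only [phiMap]
    rw [h]
end

section
/- Assume the faithfulness condition (F). Let P_A = ℂ[u_1,…,u_{ℓ+k}, v_1,…,v_{ℓ+k}] and P_B = ℂ[z_1,…,z_{k+1}, w_1,…,w_{k+1}]. Let φ* : P_A → P_B be the ℂ-algebra homomorphism determined by u_i ↦ √(m_i/β)·z_1 and v_i ↦ √(m_i/β)·w_1 for i = 1,…,ℓ, and u_{ℓ+r} ↦ z_{1+r}, v_{ℓ+r} ↦ w_{1+r} for r = 1,…,k. Then: (a) φ* maps (ℂ^×)^ℓ-invariant polynomials to ℂ^×-invariant polynomials; (b) φ* maps each moment polynomial J_{A,i} = −a_i u_i v_i + n_i Σ_{r=1}^k c_r u_{ℓ+r} v_{ℓ+r} to the scalar multiple (n_i/β)·J_B of J_B = −α z_1 w_1 + β Σ_{r=1}^k c_r z_{1+r} w_{1+r}; and (c) the induced ℂ-algebra homomorphism from P_A^{inv}/(J_{A,1},…,J_{A,ℓ}) to P_B^{inv}/(J_B) (quotients of the invariant subalgebras by the ideals generated there by the moment polynomials) is a degree-preserving isomorphism of graded ℂ-algebras. -/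
open Complex MvPolynomial

/-- The polynomial ring `P_A = ℂ[u, v]` with `u, v` each indexed by `Fin ℓ ⊕ Fin k`
(the left summand of the variable type is `u`, the right is `v`). -/
abbrev PA (ℓ k : ℕ) := MvPolynomial ((Fin ℓ ⊕ Fin k) ⊕ (Fin ℓ ⊕ Fin k)) ℂ

/-- The polynomial ring `P_B = ℂ[z, w]` with `z, w` each indexed by `Unit ⊕ Fin k`
(`Sum.inl ()` is the first coordinate `z_1` resp. `w_1`). -/
abbrev PB (k : ℕ) := MvPolynomial ((Unit ⊕ Fin k) ⊕ (Unit ⊕ Fin k)) ℂ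

/-- The substitution action of `t ∈ (ℂ^×)^ℓ` on `P_A`:
`u_i ↦ t_i^{-a_i} u_i`, `v_i ↦ t_i^{a_i} v_i`,
`u_{ℓ+r} ↦ (∏_i t_i^{c_r n_i}) u_{ℓ+r}`, `v_{ℓ+r} ↦ (∏_i t_i^{c_r n_i})⁻¹ v_{ℓ+r}`. -/
noncomputable def actPA (ℓ k : ℕ) (a n : Fin ℓ → ℕ) (c : Fin k → ℕ)
    (t : Fin ℓ → ℂ) : PA ℓ k →ₐ[ℂ] PA ℓ k :=
  aeval fun x => match x with
    | Sum.inl (Sum.inl i) => C (t i ^ (-(a i : ℤ))) * X (Sum.inl (Sum.inl i))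
    | Sum.inl (Sum.inr r) => C (∏ i, t i ^ (c r * n i)) * X (Sum.inl (Sum.inr r))
    | Sum.inr (Sum.inl i) => C (t i ^ (a i : ℤ)) * X (Sum.inr (Sum.inl i))
    | Sum.inr (Sum.inr r) => C ((∏ i, t i ^ (c r * n i))⁻¹) * X (Sum.inr (Sum.inr r))

/-- The substitution action of `t ∈ ℂ^×` on `P_B`:
`z_1 ↦ t^{-α} z_1`, `w_1 ↦ t^{α} w_1`, `z_{1+r} ↦ t^{c_r β} z_{1+r}`,
`w_{1+r} ↦ t^{-c_r β} w_{1+r}`. -/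
noncomputable def actPB (k : ℕ) (α β : ℕ) (c : Fin k → ℕ) (t : ℂ) :
    PB k →ₐ[ℂ] PB k :=
  aeval fun x => match x with
    | Sum.inl (Sum.inl _) => C (t ^ (-(α : ℤ))) * X (Sum.inl (Sum.inl ()))
    | Sum.inl (Sum.inr r) => C (t ^ ((c r * β : ℕ) : ℤ)) * X (Sum.inl (Sum.inr r))
    | Sum.inr (Sum.inl _) => C (t ^ ((α : ℕ) : ℤ)) * X (Sum.inr (Sum.inl ()))
    | Sum.inr (Sum.inr r) => C (t ^ (-((c r * β : ℕ) : ℤ))) * X (Sum.inr (Sum.inr r))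

/-- The subalgebra of `(ℂ^×)^ℓ`-invariant polynomials in `P_A`. -/
noncomputable def invPA (ℓ k : ℕ) (a n : Fin ℓ → ℕ) (c : Fin k → ℕ) :
    Subalgebra ℂ (PA ℓ k) where
  carrier := {f | ∀ t : Fin ℓ → ℂ, (∀ i, t i ≠ 0) → actPA ℓ k a n c t f = f}
  mul_mem' hf hg t ht := by rw [map_mul, hf t ht, hg t ht]
  add_mem' hf hg t ht := by rw [map_add, hf t ht, hg t ht]
  one_mem' t ht := map_one _
  zero_mem' t ht := map_zero _
  algebraMap_mem' r t ht := (actPA ℓ k a n c t).commutes r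

/-- The subalgebra of `ℂ^×`-invariant polynomials in `P_B`. -/
noncomputable def invPB (k : ℕ) (α β : ℕ) (c : Fin k → ℕ) :
    Subalgebra ℂ (PB k) where
  carrier := {f | ∀ t : ℂ, t ≠ 0 → actPB k α β c t f = f}
  mul_mem' hf hg t ht := by rw [map_mul, hf t ht, hg t ht]
  add_mem' hf hg t ht := by rw [map_add, hf t ht, hg t ht]
  one_mem' t ht := map_one _
  zero_mem' t ht := map_zero _
  algebraMap_mem' r t ht := (actPB k α β c t).commutes r

/-- The pullback `φ* : P_A → P_B` of the embedding `φ`: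
`u_i ↦ √(m_i/β) z_1`, `v_i ↦ √(m_i/β) w_1`, `u_{ℓ+r} ↦ z_{1+r}`, `v_{ℓ+r} ↦ w_{1+r}`. -/
noncomputable def phiStar (ℓ k : ℕ) (m : Fin ℓ → ℕ) (β : ℕ) :
    PA ℓ k →ₐ[ℂ] PB k :=
  aeval fun x => match x with
    | Sum.inl (Sum.inl i) =>
        C ((Real.sqrt ((m i : ℝ) / (β : ℝ)) : ℝ) : ℂ) * X (Sum.inl (Sum.inl ()))
    | Sum.inl (Sum.inr r) => X (Sum.inl (Sum.inr r))
    | Sum.inr (Sum.inl i) =>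
        C ((Real.sqrt ((m i : ℝ) / (β : ℝ)) : ℝ) : ℂ) * X (Sum.inr (Sum.inl ()))
    | Sum.inr (Sum.inr r) => X (Sum.inr (Sum.inr r))

/-- The moment map components `J_{A,i} = -a_i u_i v_i + n_i Σ_r c_r u_{ℓ+r} v_{ℓ+r}`. -/
noncomputable def JA (ℓ k : ℕ) (a n : Fin ℓ → ℕ) (c : Fin k → ℕ) (i : Fin ℓ) :
    PA ℓ k :=
  -(C ((a i : ℂ)) * X (Sum.inl (Sum.inl i)) * X (Sum.inr (Sum.inl i)))
    + C ((n i : ℂ)) * ∑ r, C ((c r : ℂ)) * X (Sum.inl (Sum.inr r)) * X (Sum.inr (Sum.inr r))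

/-- The moment polynomial `J_B = -α z_1 w_1 + β Σ_r c_r z_{1+r} w_{1+r}`. -/
noncomputable def JB (k : ℕ) (α β : ℕ) (c : Fin k → ℕ) : PB k :=
  -(C ((α : ℂ)) * X (Sum.inl (Sum.inl ())) * X (Sum.inr (Sum.inl ())))
    + C ((β : ℂ)) * ∑ r, C ((c r : ℂ)) * X (Sum.inl (Sum.inr r)) * X (Sum.inr (Sum.inr r))

/-- The ideal of `P_A^{inv}` generated by the moment map components. -/
noncomputable def idealA (ℓ k : ℕ) (a n : Fin ℓ → ℕ) (c : Fin k → ℕ) :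
    Ideal (invPA ℓ k a n c) :=
  Ideal.span {f : invPA ℓ k a n c | ∃ i, (f : PA ℓ k) = JA ℓ k a n c i}

/-- The ideal of `P_B^{inv}` generated by the moment polynomial. -/
noncomputable def idealB (k : ℕ) (α β : ℕ) (c : Fin k → ℕ) :
    Ideal (invPB k α β c) :=
  Ideal.span {f : invPB k α β c | (f : PB k) = JB k α β c}

/-! ### Diagonal actions -/

theorem coeff_diag {σ : Type*} [Fintype σ] (χ : σ → ℂ) (f : MvPolynomial σ ℂ) (e : σ →₀ ℕ) :
    coeff e (aeval (fun x => C (χ x) * X x : σ → MvPolynomial σ ℂ) f)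
      = (∏ x, χ x ^ e x) * coeff e f := by
  classical
  induction f using MvPolynomial.induction_on' with
  | monomial d b =>
    have : aeval (fun x => C (χ x) * X x : σ → MvPolynomial σ ℂ) (monomial d b)
        = monomial d ((∏ x, χ x ^ d x) * b) := by
      rw [aeval_monomial, Finsupp.prod_fintype _ _ (by simp)]
      simp only [mul_pow, Finset.prod_mul_distrib]
      have h2 : (∏ x, (X x : MvPolynomial σ ℂ) ^ d x) = monomial d 1 := by
        rw [monomial_eq, Finsupp.prod_fintype _ _ (by simp)]; simp
      have h1 : (∏ x, (C (χ x) : MvPolynomial σ ℂ) ^ d x) = C (∏ x, χ x ^ d x) := by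
        simp
      rw [h1, h2, algebraMap_eq, C_mul_monomial, C_mul_monomial]
      congr 1; ring
    rw [this, coeff_monomial, coeff_monomial]
    split_ifs with h
    · rw [h]
    · simp
  | add p q hp hq => rw [map_add, coeff_add, hp, hq, coeff_add, mul_add]

theorem diag_fix {σ : Type*} [Fintype σ] (χ : σ → ℂ) (f : MvPolynomial σ ℂ) :
    aeval (fun x => C (χ x) * X x : σ → MvPolynomial σ ℂ) f = f ↔
      ∀ e ∈ f.support, ∏ x, χ x ^ e x = 1 := by
  rw [MvPolynomial.ext_iff]
  constructor
  · intro h e he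
    have := h e
    rw [coeff_diag] at this
    exact mul_right_cancel₀ (mem_support_iff.mp he) (this.trans (one_mul _).symm)
  · intro h e
    rw [coeff_diag]
    by_cases he : e ∈ f.support
    · rw [h e he, one_mul]
    · rw [notMem_support_iff.mp he, mul_zero]

section
variable {ℓ k : ℕ} (a n : Fin ℓ → ℕ) (c : Fin k → ℕ)

/-- Common part of the weights. -/
def wS {ι : Type*} (c : Fin k → ℕ) (e : (ι ⊕ Fin k) ⊕ (ι ⊕ Fin k) →₀ ℕ) : ℤ :=
  ∑ r, (c r : ℤ) * ((e (Sum.inl (Sum.inr r)) : ℤ) - e (Sum.inr (Sum.inr r)))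

def wA (e : (Fin ℓ ⊕ Fin k) ⊕ (Fin ℓ ⊕ Fin k) →₀ ℕ) (i : Fin ℓ) : ℤ :=
  (a i : ℤ) * ((e (Sum.inr (Sum.inl i)) : ℤ) - e (Sum.inl (Sum.inl i))) + n i * wS c e

def wB (α β : ℕ) (c : Fin k → ℕ) (e : (Unit ⊕ Fin k) ⊕ (Unit ⊕ Fin k) →₀ ℕ) : ℤ :=
  (α : ℤ) * ((e (Sum.inr (Sum.inl ())) : ℤ) - e (Sum.inl (Sum.inl ()))) + β * wS c e

theorem two_zpow_eq_one {w : ℤ} (h : (2 : ℂ) ^ w = 1) : w = 0 := by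
  have h2 : (2 : ℝ) ^ w = 1 := by
    apply Complex.ofReal_injective
    push_cast
    exact h
  exact (zpow_eq_one_iff_right₀ (by norm_num) (by norm_num)).mp h2

theorem mem_invPA {f : PA ℓ k} :
    f ∈ invPA ℓ k a n c ↔ ∀ e ∈ f.support, ∀ i, wA a n c e i = 0 := by
  have key : ∀ t : Fin ℓ → ℂ, (∀ i, t i ≠ 0) → (actPA ℓ k a n c t f = f ↔
      ∀ e ∈ f.support, ∏ i, t i ^ wA a n c e i = 1) := by
    intro t ht
    have h1 : actPA ℓ k a n c t = aeval (fun x => C ((fun x => match x with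
        | Sum.inl (Sum.inl i) => (t i ^ (-(a i : ℤ)))
        | Sum.inl (Sum.inr r) => (∏ i, t i ^ (c r * n i))
        | Sum.inr (Sum.inl i) => (t i ^ (a i : ℤ))
        | Sum.inr (Sum.inr r) => ((∏ i, t i ^ (c r * n i))⁻¹) :
          (Fin ℓ ⊕ Fin k) ⊕ (Fin ℓ ⊕ Fin k) → ℂ) x) * X x) := by
      unfold actPA
      congr 1
      funext x
      rcases x with (i | r) | (i | r) <;> rfl
    rw [h1, diag_fix]
    refine forall₂_congr fun e he => ?_
    apply Eq.congr_left
    simp only [Fintype.prod_sum_type]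
    have h2 : ∀ i, t i ^ wA a n c e i = (t i ^ (-(a i : ℤ))) ^ e (Sum.inl (Sum.inl i)) *
        (t i ^ (a i : ℤ)) ^ e (Sum.inr (Sum.inl i)) *
        ∏ r, ((t i ^ (c r * n i)) ^ e (Sum.inl (Sum.inr r)) *
          ((t i ^ (c r * n i))⁻¹) ^ e (Sum.inr (Sum.inr r))) := by
      intro i
      have h3 : ∀ r, ((t i ^ (c r * n i)) ^ e (Sum.inl (Sum.inr r)) *
          ((t i ^ (c r * n i))⁻¹) ^ e (Sum.inr (Sum.inr r))) =
          t i ^ ((n i : ℤ) * ((c r : ℤ) *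
            ((e (Sum.inl (Sum.inr r)) : ℤ) - e (Sum.inr (Sum.inr r))))) := by
        intro r
        rw [← zpow_natCast, ← zpow_natCast, ← zpow_natCast, ← zpow_neg, ← zpow_mul, ← zpow_mul,
          ← zpow_add₀ (ht i)]
        congr 1; push_cast; ring
      have h4 : ∀ g : Fin k → ℤ, ∏ r, t i ^ g r = t i ^ ∑ r, g r := by
        intro g
        induction (Finset.univ : Finset (Fin k)) using Finset.induction_on with
        | empty => simp
        | insert x s hx ih => rw [Finset.prod_insert hx, Finset.sum_insert hx, ih, zpow_add₀ (ht i)]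
      simp only [h3]
      rw [h4, ← zpow_natCast, ← zpow_natCast, ← zpow_mul, ← zpow_mul, ← zpow_add₀ (ht i),
        ← zpow_add₀ (ht i), ← Finset.mul_sum]
      congr 1
      unfold wA wS
      ring
    simp only [h2, Finset.prod_mul_distrib]
    rw [Finset.prod_comm, Finset.prod_comm (f := fun i r => ((t i ^ (c r * n i))⁻¹) ^ e (Sum.inr (Sum.inr r)))]
    simp only [Finset.prod_pow, Finset.prod_inv_distrib]
    ring
  constructor
  · intro hf e he i
    have := (key (Function.update 1 i 2) (by
      intro j; by_cases h : j = i
      · subst h; simp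
      · simp [h])).mp (hf _ (by
      intro j; by_cases h : j = i
      · subst h; simp
      · simp [h])) e he
    rw [Finset.prod_eq_single i (by intro j _ h; simp [h]) (by simp)] at this
    simp only [Function.update_self] at this
    exact two_zpow_eq_one this
  · intro h t ht
    rw [key t ht]
    intro e he
    simp [h e he]

theorem mem_invPB {α β : ℕ} {f : PB k} :
    f ∈ invPB k α β c ↔ ∀ e ∈ f.support, wB α β c e = 0 := by
  have key : ∀ t : ℂ, t ≠ 0 → (actPB k α β c t f = f ↔
      ∀ e ∈ f.support, t ^ wB α β c e = 1) := by
    intro t ht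
    have h1 : actPB k α β c t = aeval (fun x => C ((fun x => match x with
        | Sum.inl (Sum.inl _) => (t ^ (-(α : ℤ)))
        | Sum.inl (Sum.inr r) => (t ^ ((c r * β : ℕ) : ℤ))
        | Sum.inr (Sum.inl _) => (t ^ (α : ℤ))
        | Sum.inr (Sum.inr r) => (t ^ (-((c r * β : ℕ) : ℤ))) :
          (Unit ⊕ Fin k) ⊕ (Unit ⊕ Fin k) → ℂ) x) * X x) := by
      unfold actPB
      congr 1
      funext x
      rcases x with (i | r) | (i | r) <;> rfl
    rw [h1, diag_fix]
    refine forall₂_congr fun e he => ?_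
    apply Eq.congr_left
    simp only [Fintype.prod_sum_type]
    have h4 : ∀ g : Fin k → ℤ, ∏ r, t ^ g r = t ^ ∑ r, g r := by
      intro g
      induction (Finset.univ : Finset (Fin k)) using Finset.induction_on with
      | empty => simp
      | insert x s hx ih => rw [Finset.prod_insert hx, Finset.sum_insert hx, ih, zpow_add₀ ht]
    have h5 : ∀ (x : ℤ) (y : ℕ), (t ^ x) ^ y = t ^ (x * y) := by
      intro x y; rw [zpow_mul, zpow_natCast]
    simp only [h5, h4, Finset.univ_unique, Finset.prod_singleton, ← zpow_add₀ ht]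
    congr 1
    unfold wB wS
    simp only [mul_sub, Finset.sum_sub_distrib, Finset.mul_sum, neg_mul, Finset.sum_neg_distrib]
    push_cast
    have e1 : ∀ g : Fin k → ℤ, ∑ r, (c r : ℤ) * β * g r = ∑ r, (β : ℤ) * (c r * g r) :=
      fun g => Finset.sum_congr rfl fun r _ => by ring
    rw [e1, e1]
    simp only [PUnit.default_eq_unit]
    ring
  constructor
  · intro hf e he
    exact two_zpow_eq_one ((key 2 (by norm_num)).mp (hf 2 (by norm_num)) e he)
  · intro h t ht
    rw [key t ht]
    intro e he
    simp [h e he]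

end

section
variable {ℓ k : ℕ}

/-- Exponent map induced by `phiStar`. -/
noncomputable def piE (e : (Fin ℓ ⊕ Fin k) ⊕ (Fin ℓ ⊕ Fin k) →₀ ℕ) :
    (Unit ⊕ Fin k) ⊕ (Unit ⊕ Fin k) →₀ ℕ :=
  Finsupp.equivFunOnFinite.symm (Sum.elim
    (Sum.elim (fun _ => ∑ i, e (Sum.inl (Sum.inl i))) (fun r => e (Sum.inl (Sum.inr r))))
    (Sum.elim (fun _ => ∑ i, e (Sum.inr (Sum.inl i))) (fun r => e (Sum.inr (Sum.inr r)))))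

noncomputable def kap (m : Fin ℓ → ℕ) (β : ℕ)
    (e : (Fin ℓ ⊕ Fin k) ⊕ (Fin ℓ ⊕ Fin k) →₀ ℕ) : ℂ :=
  (∏ i, ((Real.sqrt ((m i : ℝ) / (β : ℝ)) : ℝ) : ℂ) ^ e (Sum.inl (Sum.inl i))) *
  (∏ i, ((Real.sqrt ((m i : ℝ) / (β : ℝ)) : ℝ) : ℂ) ^ e (Sum.inr (Sum.inl i)))

theorem monomial_eq_prod {σ : Type*} [Fintype σ] (d : σ →₀ ℕ) (b : ℂ) :
    monomial d b = C b * ∏ x, (X x : MvPolynomial σ ℂ) ^ d x := by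
  rw [monomial_eq, Finsupp.prod_fintype _ _ (by simp)]

theorem phi_monomial (m : Fin ℓ → ℕ) (β : ℕ)
    (e : (Fin ℓ ⊕ Fin k) ⊕ (Fin ℓ ⊕ Fin k) →₀ ℕ) (b : ℂ) :
    phiStar ℓ k m β (monomial e b) = monomial (piE e) (kap m β e * b) := by
  unfold phiStar
  rw [aeval_monomial, Finsupp.prod_fintype _ _ (by simp), monomial_eq_prod]
  simp only [Fintype.prod_sum_type, piE, Finsupp.equivFunOnFinite_symm_apply_apply, Sum.elim_inl, Sum.elim_inr,
    mul_pow, Finset.prod_mul_distrib, Finset.univ_unique, Finset.prod_singleton,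
    Finset.prod_pow_eq_pow_sum, kap, map_mul, map_prod, map_pow, algebraMap_eq, PUnit.default_eq_unit]
  ring

theorem kap_ne (m : Fin ℓ → ℕ) (hm0 : ∀ i, 0 < m i) (β : ℕ) (hβ : 0 < β)
    (e : (Fin ℓ ⊕ Fin k) ⊕ (Fin ℓ ⊕ Fin k) →₀ ℕ) : kap m β e ≠ 0 := by
  have h : ∀ i, ((Real.sqrt ((m i : ℝ) / (β : ℝ)) : ℝ) : ℂ) ≠ 0 := by
    intro i
    have h1 : (0 : ℝ) < m i := by exact_mod_cast hm0 i
    have h2 : (0 : ℝ) < β := by exact_mod_cast hβ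
    exact_mod_cast (Real.sqrt_pos.mpr (div_pos h1 h2)).ne'
  unfold kap
  exact mul_ne_zero (Finset.prod_ne_zero_iff.mpr fun i _ => pow_ne_zero _ (h i))
    (Finset.prod_ne_zero_iff.mpr fun i _ => pow_ne_zero _ (h i))

variable (a n : Fin ℓ → ℕ) (c : Fin k → ℕ)

theorem wS_piE (e : (Fin ℓ ⊕ Fin k) ⊕ (Fin ℓ ⊕ Fin k) →₀ ℕ) : wS c (piE e) = wS c e := rfl

theorem wB_piE (ha : ∀ i, 0 < a i) (α : ℕ) (m : Fin ℓ → ℕ) (hm : ∀ i, m i * a i = n i * α)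
    (e : (Fin ℓ ⊕ Fin k) ⊕ (Fin ℓ ⊕ Fin k) →₀ ℕ) (he : ∀ i, wA a n c e i = 0) :
    wB α (∑ i, m i) c (piE e) = 0 := by
  unfold wB
  rw [wS_piE]
  have h : ∀ i, (α : ℤ) * ((e (Sum.inr (Sum.inl i)) : ℤ) - e (Sum.inl (Sum.inl i)))
      + m i * wS c e = 0 := by
    intro i
    have h1 := he i
    unfold wA at h1
    have h2 : (m i : ℤ) * a i = n i * α := by exact_mod_cast hm i
    have h3 : (a i : ℤ) ≠ 0 := by exact_mod_cast (ha i).ne'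
    apply mul_left_cancel₀ h3
    linear_combination (α : ℤ) * h1 + wS c e * h2
  have h4 := Finset.sum_congr (rfl : (Finset.univ : Finset (Fin ℓ)) = Finset.univ)
    (fun i _ => h i)
  simp only [Finset.sum_add_distrib, ← Finset.mul_sum, ← Finset.sum_mul, Finset.sum_sub_distrib,
    Finset.sum_const_zero] at h4
  simp only [piE, Finsupp.equivFunOnFinite_symm_apply_apply, Sum.elim_inl, Sum.elim_inr]
  push_cast
  exact h4

theorem phi_inv (ha : ∀ i, 0 < a i) (α : ℕ) (m : Fin ℓ → ℕ) (hm : ∀ i, m i * a i = n i * α)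
    (f : PA ℓ k) (hf : f ∈ invPA ℓ k a n c) :
    phiStar ℓ k m (∑ i, m i) f ∈ invPB k α (∑ i, m i) c := by
  rw [mem_invPA] at hf
  rw [f.as_sum, map_sum]
  refine Subalgebra.sum_mem _ fun e he => ?_
  rw [phi_monomial, mem_invPB]
  intro e' he'
  have := support_monomial_subset he'
  rw [Finset.mem_singleton] at this
  subst this
  exact wB_piE a n c ha α m hm e (hf e he)

theorem phi_JA (α : ℕ) (m : Fin ℓ → ℕ) (hm : ∀ i, m i * a i = n i * α)
    (β : ℕ) (hβ : 0 < β) (i : Fin ℓ) :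
    phiStar ℓ k m β (JA ℓ k a n c i) = C ((n i : ℂ) / (β : ℂ)) * JB k α β c := by
  have hβ' : (β : ℂ) ≠ 0 := by exact_mod_cast hβ.ne'
  have hs : ((Real.sqrt ((m i : ℝ) / (β : ℝ)) : ℝ) : ℂ) * ((Real.sqrt ((m i : ℝ) / (β : ℝ)) : ℝ) : ℂ)
      = (m i : ℂ) / β := by
    rw [← Complex.ofReal_mul, Real.mul_self_sqrt (by positivity)]
    push_cast; rfl
  have h1 : (a i : ℂ) * (((Real.sqrt ((m i : ℝ) / (β : ℝ)) : ℝ) : ℂ) * ((Real.sqrt ((m i : ℝ) / (β : ℝ)) : ℝ) : ℂ))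
      = (n i : ℂ) / β * α := by
    rw [hs]
    have h2 : (m i : ℂ) * a i = n i * α := by exact_mod_cast hm i
    field_simp
    linear_combination h2
  have h2 : (n i : ℂ) = n i / β * β := by field_simp
  have h1' := congrArg (C : ℂ → PB k) h1
  have h2' := congrArg (C : ℂ → PB k) h2
  simp only [map_mul] at h1' h2'
  unfold JA JB phiStar
  simp only [map_add, map_neg, map_mul, map_sum, aeval_X, algHom_C, algebraMap_eq]
  linear_combination (-(X (Sum.inl (Sum.inl ())) * X (Sum.inr (Sum.inl ())))) * h1' +
    (∑ r, C ((c r : ℂ)) * X (Sum.inl (Sum.inr r)) * X (Sum.inr (Sum.inr r))) * h2'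

theorem monomial_memA (e : (Fin ℓ ⊕ Fin k) ⊕ (Fin ℓ ⊕ Fin k) →₀ ℕ)
    (he : ∀ i, wA a n c e i = 0) (b : ℂ) : monomial e b ∈ invPA ℓ k a n c := by
  rw [mem_invPA]
  intro e' he'
  have := support_monomial_subset he'
  rw [Finset.mem_singleton] at this
  subst this
  exact he

theorem monomial_memB (α β : ℕ) (e : (Unit ⊕ Fin k) ⊕ (Unit ⊕ Fin k) →₀ ℕ)
    (he : wB α β c e = 0) (b : ℂ) : monomial e b ∈ invPB k α β c := by
  rw [mem_invPB]
  intro e' he'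
  have := support_monomial_subset he'
  rw [Finset.mem_singleton] at this
  subst this
  exact he

/-- exponent of `u_j v_j` -/
noncomputable def pr {ι : Type*} (j : ι) : ι ⊕ ι →₀ ℕ :=
  Finsupp.single (Sum.inl j) 1 + Finsupp.single (Sum.inr j) 1

theorem pr_inl_eq {ι : Type*} (j l : ι) : (pr j) (Sum.inl l) = (pr j) (Sum.inr l) := by
  classical
  simp [pr, Finsupp.single_apply]

theorem wS_pr {ι : Type*} (j : ι ⊕ Fin k) : wS c (pr j) = 0 := by
  simp [wS, pr_inl_eq]

theorem wS_add {ι : Type*} (e e' : (ι ⊕ Fin k) ⊕ (ι ⊕ Fin k) →₀ ℕ) :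
    wS c (e + e') = wS c e + wS c e' := by
  simp only [wS, Finsupp.add_apply, ← Finset.sum_add_distrib]
  refine Finset.sum_congr rfl fun r _ => ?_
  push_cast; ring

theorem wA_add_pr (e : (Fin ℓ ⊕ Fin k) ⊕ (Fin ℓ ⊕ Fin k) →₀ ℕ) (j : Fin ℓ ⊕ Fin k) (i : Fin ℓ) :
    wA a n c (e + pr j) i = wA a n c e i := by
  simp only [wA, wS_add, wS_pr, Finsupp.add_apply, pr_inl_eq]
  push_cast; ring

theorem wB_add_pr (α β : ℕ) (e : (Unit ⊕ Fin k) ⊕ (Unit ⊕ Fin k) →₀ ℕ) (j : Unit ⊕ Fin k) :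
    wB α β c (e + pr j) = wB α β c e := by
  simp only [wB, wS_add, wS_pr, Finsupp.add_apply, pr_inl_eq]
  push_cast; ring

theorem monomial_pr {ι : Type*} (j : ι) :
    (monomial (pr j) 1 : MvPolynomial (ι ⊕ ι) ℂ) = X (Sum.inl j) * X (Sum.inr j) := by
  rw [pr, ← mul_one (1 : ℂ), ← monomial_mul]; simp [X]

theorem JA_eq (i : Fin ℓ) : JA ℓ k a n c i = -(monomial (pr (Sum.inl i)) (a i : ℂ))
    + ∑ r, monomial (pr (Sum.inr r)) (n i * c r : ℂ) := by
  have h : ∀ (j : Fin ℓ ⊕ Fin k) (b : ℂ), (monomial (pr j) b : PA ℓ k)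
      = C b * X (Sum.inl j) * X (Sum.inr j) := by
    intro j b
    rw [mul_assoc, ← monomial_pr, C_mul_monomial, mul_one]
  unfold JA
  simp only [h, Finset.mul_sum, map_mul]
  congr 1
  exact Finset.sum_congr rfl fun r _ => by ring

theorem JB_eq (α β : ℕ) : JB k α β c = -(monomial (pr (Sum.inl ())) (α : ℂ))
    + ∑ r, monomial (pr (Sum.inr r)) (β * c r : ℂ) := by
  have h : ∀ (j : Unit ⊕ Fin k) (b : ℂ), (monomial (pr j) b : PB k)
      = C b * X (Sum.inl j) * X (Sum.inr j) := by
    intro j b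
    rw [mul_assoc, ← monomial_pr, C_mul_monomial, mul_one]
  unfold JB
  simp only [h, Finset.mul_sum, map_mul]
  congr 1
  exact Finset.sum_congr rfl fun r _ => by ring

theorem JA_inv (i : Fin ℓ) : JA ℓ k a n c i ∈ invPA ℓ k a n c := by
  have h : ∀ (j : Fin ℓ ⊕ Fin k) i, wA a n c (pr j) i = 0 := by
    intro j i
    have := wA_add_pr a n c 0 j i
    rw [zero_add] at this
    rw [this]; simp [wA, wS]
  rw [JA_eq]
  exact Subalgebra.add_mem _ (Subalgebra.neg_mem _ (monomial_memA _ _ _ _ (h _) _))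
    (Subalgebra.sum_mem _ fun r _ => monomial_memA _ _ _ _ (h _) _)

theorem JB_inv (α β : ℕ) : JB k α β c ∈ invPB k α β c := by
  have h : ∀ (j : Unit ⊕ Fin k), wB α β c (pr j) = 0 := by
    intro j
    have := wB_add_pr c α β 0 j
    rw [zero_add] at this
    rw [this]; simp [wB, wS]
  rw [JB_eq]
  exact Subalgebra.add_mem _ (Subalgebra.neg_mem _ (monomial_memB _ _ _ _ (h _) _))
    (Subalgebra.sum_mem _ fun r _ => monomial_memB _ _ _ _ (h _) _)

/-- Image of `idealA` in `PA`. -/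
noncomputable def IA : Submodule ℂ (PA ℓ k) :=
  ((idealA ℓ k a n c).restrictScalars ℂ).map (invPA ℓ k a n c).val.toLinearMap

noncomputable def IB (α β : ℕ) : Submodule ℂ (PB k) :=
  ((idealB k α β c).restrictScalars ℂ).map (invPB k α β c).val.toLinearMap

theorem mul_JA_mem (f : PA ℓ k) (hf : f ∈ invPA ℓ k a n c) (i : Fin ℓ) :
    f * JA ℓ k a n c i ∈ IA a n c := by
  have h : (⟨JA ℓ k a n c i, JA_inv a n c i⟩ : invPA ℓ k a n c) ∈ idealA ℓ k a n c := by
    apply Ideal.subset_span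
    exact ⟨i, by rfl⟩
  exact Submodule.mem_map.mpr
    ⟨⟨f, hf⟩ * ⟨_, JA_inv a n c i⟩, Ideal.mul_mem_left _ _ h, by simp⟩

theorem mul_JB_mem (α β : ℕ) (f : PB k) (hf : f ∈ invPB k α β c) :
    f * JB k α β c ∈ IB c α β := by
  have h : (⟨JB k α β c, JB_inv c α β⟩ : invPB k α β c) ∈ idealB k α β c := by
    apply Ideal.subset_span
    rw [Set.mem_ofPred_eq]
  exact Submodule.mem_map.mpr
    ⟨⟨f, hf⟩ * ⟨_, JB_inv c α β⟩, Ideal.mul_mem_left _ _ h, by simp⟩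

theorem mem_IA (f : invPA ℓ k a n c) : (f : PA ℓ k) ∈ IA a n c ↔ f ∈ idealA ℓ k a n c := by
  constructor
  · rintro ⟨g, hg, h⟩
    have : g = f := Subtype.ext h
    exact this ▸ hg
  · intro h; exact ⟨f, h, rfl⟩

theorem mem_IB (α β : ℕ) (f : invPB k α β c) :
    (f : PB k) ∈ IB c α β ↔ f ∈ idealB k α β c := by
  constructor
  · rintro ⟨g, hg, h⟩
    have : g = f := Subtype.ext h
    exact this ▸ hg
  · intro h; exact ⟨f, h, rfl⟩

theorem IB_dvd (α β : ℕ) (f : PB k) (hf : f ∈ IB c α β) : JB k α β c ∣ f := by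
  obtain ⟨g, hg, rfl⟩ := hf
  have : idealB k α β c ≤ (Ideal.span {JB k α β c}).comap (invPB k α β c).val.toRingHom := by
    unfold idealB
    rw [Ideal.span_le]
    intro x hx
    exact Ideal.subset_span hx
  exact Ideal.mem_span_singleton.mp (this hg)

end

section
variable {ℓ k : ℕ} (a n : Fin ℓ → ℕ) (c : Fin k → ℕ)

def NA : Set ((Fin ℓ ⊕ Fin k) ⊕ (Fin ℓ ⊕ Fin k) →₀ ℕ) :=
  {e | (∀ i, wA a n c e i = 0) ∧ ∀ i, e (Sum.inl (Sum.inl i)) = 0 ∨ e (Sum.inr (Sum.inl i)) = 0}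

theorem exists_sub_pr {ι : Type*} (e : ι ⊕ ι →₀ ℕ) (j : ι) (h1 : e (Sum.inl j) ≠ 0)
    (h2 : e (Sum.inr j) ≠ 0) : ∃ e', e = e' + pr j := by
  classical
  refine ⟨e - pr j, (tsub_add_cancel_of_le ?_).symm⟩
  intro x
  rcases x with x | x <;> simp only [pr, Finsupp.add_apply, Finsupp.single_apply] <;>
    by_cases hx : j = x <;> simp [hx] <;> subst hx <;> omega

theorem pr_self {ι : Type*} (j : ι) : (pr j) (Sum.inl j) = 1 := by
  simp [pr]

theorem pr_ne {ι : Type*} {j l : ι} (h : j ≠ l) : (pr j) (Sum.inl l) = 0 := by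
  simp [pr, h]

theorem mul_smul_mono {σ : Type*} (S : Submodule ℂ (MvPolynomial σ ℂ)) (e : σ →₀ ℕ) (b : ℂ)
    (h : monomial e 1 ∈ S) : monomial e b ∈ S := by
  have := S.smul_mem b h
  rwa [smul_monomial, smul_eq_mul, mul_one] at this

theorem reduceA_mono (ha : ∀ i, 0 < a i) (N : ℕ) :
    ∀ e : (Fin ℓ ⊕ Fin k) ⊕ (Fin ℓ ⊕ Fin k) →₀ ℕ, (∀ i, wA a n c e i = 0) →
    ∑ i, e (Sum.inl (Sum.inl i)) = N →
    (monomial e 1 : PA ℓ k) ∈ restrictSupport ℂ (NA a n c) ⊔ IA a n c := by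
  induction N with
  | zero =>
    intro e he hN
    apply Submodule.mem_sup_left
    rw [monomial_mem_restrictSupport]
    left
    refine ⟨he, fun i => Or.inl ?_⟩
    exact (Finset.sum_eq_zero_iff.mp hN) i (Finset.mem_univ i)
  | succ N ih =>
    intro e he hN
    by_cases hno : ∀ i, e (Sum.inl (Sum.inl i)) = 0 ∨ e (Sum.inr (Sum.inl i)) = 0
    · apply Submodule.mem_sup_left
      rw [monomial_mem_restrictSupport]
      exact Or.inl ⟨he, hno⟩
    · push Not at hno
      obtain ⟨i, h1, h2⟩ := hno
      obtain ⟨e', rfl⟩ := exists_sub_pr e (Sum.inl i) h1 h2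
      have he' : ∀ j, wA a n c e' j = 0 := fun j => by rw [← wA_add_pr a n c e' (Sum.inl i) j, he]
      have ha' : (a i : ℂ) ≠ 0 := by exact_mod_cast (ha i).ne'
      have key : (monomial (e' + pr (Sum.inl i)) 1 : PA ℓ k) =
          ∑ r, monomial (e' + pr (Sum.inr r)) ((1 / (a i : ℂ)) * (n i * c r))
            - monomial e' (1 / (a i : ℂ)) * JA ℓ k a n c i := by
        rw [JA_eq, mul_add, mul_neg, Finset.mul_sum]
        simp only [monomial_mul]
        rw [one_div_mul_cancel ha']
        ring
      rw [key]
      refine Submodule.sub_mem _ (Submodule.sum_mem _ fun r _ => mul_smul_mono _ _ _ (ih _ ?_ ?_))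
        (Submodule.mem_sup_right (mul_JA_mem _ _ _ _ (monomial_memA _ _ _ _ he' _) _))
      · intro j; rw [wA_add_pr, he']
      · simp only [Finsupp.add_apply, Finset.sum_add_distrib] at hN ⊢
        have e1 : ∑ x, (pr (Sum.inl i : Fin ℓ ⊕ Fin k)) (Sum.inl (Sum.inl x)) = 1 := by
          rw [Finset.sum_eq_single i _ (by simp)]
          · exact pr_self _
          · intro j _ hj
            exact pr_ne (by simpa using hj.symm)
        have e2 : ∑ x, (pr (Sum.inr r : Fin ℓ ⊕ Fin k)) (Sum.inl (Sum.inl x)) = 0 :=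
          Finset.sum_eq_zero fun x _ => pr_ne (by simp)
        omega

theorem reduceA (ha : ∀ i, 0 < a i) (f : PA ℓ k) (hf : f ∈ invPA ℓ k a n c) :
    f ∈ restrictSupport ℂ (NA a n c) ⊔ IA a n c := by
  rw [mem_invPA] at hf
  rw [f.as_sum]
  exact Submodule.sum_mem _ fun e he => mul_smul_mono _ _ _
    (reduceA_mono a n c ha _ e (hf e he) rfl)

theorem degree_piE (e : (Fin ℓ ⊕ Fin k) ⊕ (Fin ℓ ⊕ Fin k) →₀ ℕ) :
    (piE e).degree = e.degree := by
  simp only [Finsupp.degree_eq_sum, Fintype.sum_sum_type, piE,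
    Finsupp.equivFunOnFinite_symm_apply_apply, Sum.elim_inl, Sum.elim_inr, Finset.univ_unique,
    Finset.sum_singleton]

/-- section of `piE` -/
noncomputable def sig (m : Fin ℓ → ℕ) (h : ℤ) (e : (Unit ⊕ Fin k) ⊕ (Unit ⊕ Fin k) →₀ ℕ) :
    (Fin ℓ ⊕ Fin k) ⊕ (Fin ℓ ⊕ Fin k) →₀ ℕ :=
  Finsupp.equivFunOnFinite.symm (Sum.elim
    (Sum.elim (fun i => m i * h.toNat) (fun r => e (Sum.inl (Sum.inr r))))
    (Sum.elim (fun i => m i * (-h).toNat) (fun r => e (Sum.inr (Sum.inr r)))))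

noncomputable def WB (α : ℕ) (m : Fin ℓ → ℕ) (d : ℕ) : Submodule ℂ (PB k) :=
  Submodule.map (phiStar ℓ k m (∑ i, m i)).toLinearMap
    (Subalgebra.toSubmodule (invPA ℓ k a n c) ⊓ homogeneousSubmodule _ ℂ d) ⊔ IB c α (∑ i, m i)

theorem normalB (ha : ∀ i, 0 < a i) (α : ℕ) (hα : 0 < α) (m : Fin ℓ → ℕ)
    (hm0 : ∀ i, 0 < m i) (hβ : 0 < ∑ i, m i)
    (hm : ∀ i, m i * a i = n i * α) (hcop : Nat.Coprime α (∑ i, m i))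
    (e : (Unit ⊕ Fin k) ⊕ (Unit ⊕ Fin k) →₀ ℕ) (he : wB α (∑ i, m i) c e = 0)
    (hno : e (Sum.inl (Sum.inl ())) = 0 ∨ e (Sum.inr (Sum.inl ())) = 0) :
    (monomial e 1 : PB k) ∈ WB a n c α m e.degree := by
  unfold wB at he
  have hdvd : (α : ℤ) ∣ wS c e := by
    have h1 : (α : ℤ) ∣ ((∑ i, m i : ℕ) : ℤ) * wS c e :=
      ⟨(e (Sum.inl (Sum.inl ())) : ℤ) - e (Sum.inr (Sum.inl ())), by linear_combination he⟩
    exact IsCoprime.dvd_of_dvd_mul_left (Nat.isCoprime_iff_coprime.mpr hcop) h1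
  obtain ⟨h, hh⟩ := hdvd
  have hα' : (α : ℤ) ≠ 0 := by exact_mod_cast hα.ne'
  have hpq : (e (Sum.inl (Sum.inl ())) : ℤ) - e (Sum.inr (Sum.inl ())) = ((∑ i, m i : ℕ) : ℤ) * h := by
    apply mul_left_cancel₀ hα'
    rw [hh] at he
    linear_combination -he
  have hβ' : (0 : ℤ) < ((∑ i, m i : ℕ) : ℤ) := by exact_mod_cast hβ
  have hz : e (Sum.inl (Sum.inl ())) = (∑ i, m i) * h.toNat ∧
      e (Sum.inr (Sum.inl ())) = (∑ i, m i) * (-h).toNat := by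
    generalize (∑ i, m i) = β at *
    rcases le_total 0 h with h0 | h0
    · obtain ⟨q, rfl⟩ := Int.eq_ofNat_of_zero_le h0
      have h1 : (0 : ℤ) ≤ β * (q : ℤ) := by positivity
      have h2 : e (Sum.inr (Sum.inl ())) = 0 := by omega
      simp only [Int.toNat_natCast, Int.toNat_neg_natCast, mul_zero]
      refine ⟨?_, h2⟩
      zify
      linarith
    · obtain ⟨q, hq⟩ := Int.eq_ofNat_of_zero_le (neg_nonneg.mpr h0)
      obtain rfl : h = -(q : ℤ) := by omega
      have h1 : (0 : ℤ) ≤ β * (q : ℤ) := by positivity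
      rw [mul_neg] at hpq
      have h2 : e (Sum.inl (Sum.inl ())) = 0 := by omega
      simp only [Int.toNat_natCast, Int.toNat_neg_natCast, mul_zero, neg_neg]
      refine ⟨h2, ?_⟩
      zify
      linarith
  have hpi : piE (sig m h e) = e := by
    ext x
    rcases x with (x | r) | (x | r)
    · simp only [piE, sig, Finsupp.equivFunOnFinite_symm_apply_apply, Sum.elim_inl, ← Finset.sum_mul]
      exact hz.1.symm
    · rfl
    · simp only [piE, sig, Finsupp.equivFunOnFinite_symm_apply_apply, Sum.elim_inl, Sum.elim_inr, ← Finset.sum_mul]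
      exact hz.2.symm
    · rfl
  have hS : wS c (sig m h e) = wS c e := rfl
  have hw : ∀ i, wA a n c (sig m h e) i = 0 := by
    intro i
    unfold wA
    rw [hS, hh]
    simp only [sig, Finsupp.equivFunOnFinite_symm_apply_apply, Sum.elim_inl, Sum.elim_inr]
    have h2 : (m i : ℤ) * a i = n i * α := by exact_mod_cast hm i
    have h3 : (h.toNat : ℤ) - (-h).toNat = h := by omega
    push_cast
    linear_combination -h * h2 - (m i : ℤ) * a i * h3
  apply Submodule.mem_sup_left
  refine ⟨monomial (sig m h e) (kap m (∑ i, m i) (sig m h e))⁻¹, ⟨?_, ?_⟩, ?_⟩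
  · exact monomial_memA _ _ _ _ hw _
  · apply isHomogeneous_monomial
    rw [← degree_piE, hpi]
  · rw [AlgHom.toLinearMap_apply, phi_monomial, hpi, mul_inv_cancel₀ (kap_ne m hm0 _ hβ _)]

theorem degree_pr {ι : Type*} (j : ι) : (pr j).degree = 2 := by
  simp [pr]

theorem reduceB_mono (ha : ∀ i, 0 < a i) (α : ℕ) (hα : 0 < α) (m : Fin ℓ → ℕ)
    (hm0 : ∀ i, 0 < m i) (hβ : 0 < ∑ i, m i)
    (hm : ∀ i, m i * a i = n i * α) (hcop : Nat.Coprime α (∑ i, m i)) (N : ℕ) :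
    ∀ e : (Unit ⊕ Fin k) ⊕ (Unit ⊕ Fin k) →₀ ℕ, wB α (∑ i, m i) c e = 0 →
    e (Sum.inl (Sum.inl ())) = N →
    (monomial e 1 : PB k) ∈ WB a n c α m e.degree := by
  induction N with
  | zero =>
    intro e he hN
    exact normalB a n c ha α hα m hm0 hβ hm hcop e he (Or.inl hN)
  | succ N ih =>
    intro e he hN
    by_cases h2 : e (Sum.inr (Sum.inl ())) = 0
    · exact normalB a n c ha α hα m hm0 hβ hm hcop e he (Or.inr h2)
    · obtain ⟨e', rfl⟩ := exists_sub_pr e (Sum.inl ()) (by omega) h2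
      have he' : wB α (∑ i, m i) c e' = 0 := by rw [← wB_add_pr c _ _ e' (Sum.inl ()), he]
      have hα' : (α : ℂ) ≠ 0 := by exact_mod_cast hα.ne'
      have key : (monomial (e' + pr (Sum.inl ())) 1 : PB k) =
          ∑ r, monomial (e' + pr (Sum.inr r)) ((1 / (α : ℂ)) * ((∑ i, m i : ℕ) * c r))
            - monomial e' (1 / (α : ℂ)) * JB k α (∑ i, m i) c := by
        rw [JB_eq, mul_add, mul_neg, Finset.mul_sum]
        simp only [monomial_mul]
        rw [one_div_mul_cancel hα']
        ring
      rw [key]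
      refine Submodule.sub_mem _ (Submodule.sum_mem _ fun r _ => mul_smul_mono _ _ _ ?_)
        (Submodule.mem_sup_right (mul_JB_mem _ _ _ _ (monomial_memB _ _ _ _ he' _)))
      have hd : (e' + pr (Sum.inl ())).degree = (e' + pr (Sum.inr r)).degree := by
        rw [map_add, map_add, degree_pr, degree_pr]
      rw [hd]
      refine ih _ ?_ ?_
      · rw [wB_add_pr, he']
      · rw [Finsupp.add_apply, pr_self] at hN
        rw [Finsupp.add_apply, pr_ne (by simp)]
        omega

theorem reduceB (ha : ∀ i, 0 < a i) (α : ℕ) (hα : 0 < α) (m : Fin ℓ → ℕ)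
    (hm0 : ∀ i, 0 < m i) (hβ : 0 < ∑ i, m i)
    (hm : ∀ i, m i * a i = n i * α) (hcop : Nat.Coprime α (∑ i, m i)) (d : ℕ)
    (g : PB k) (hg : g ∈ invPB k α (∑ i, m i) c) (hd : g.IsHomogeneous d) :
    ∃ f ∈ invPA ℓ k a n c, f.IsHomogeneous d ∧
      g - phiStar ℓ k m (∑ i, m i) f ∈ IB c α (∑ i, m i) := by
  have h : g ∈ WB a n c α m d := by
    rw [mem_invPB] at hg
    rw [g.as_sum]
    refine Submodule.sum_mem _ fun e he => mul_smul_mono _ _ _ ?_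
    have : e.degree = d := by
      have := hd (mem_support_iff.mp he)
      rwa [Finsupp.degree_eq_weight_one]
    rw [← this]
    exact reduceB_mono a n c ha α hα m hm0 hβ hm hcop _ e (hg e he) rfl
  obtain ⟨x, ⟨f, hf, rfl⟩, y, hy, rfl⟩ := Submodule.mem_sup.mp h
  refine ⟨f, hf.1, hf.2, ?_⟩
  simpa using hy

theorem JB_free (α β : ℕ) (hα : 0 < α) (g : PB k) (hg : JB k α β c ∣ g)
    (hfree : ∀ e ∈ g.support, e (Sum.inl (Sum.inl ())) = 0 ∨ e (Sum.inr (Sum.inl ())) = 0) :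
    g = 0 := by
  obtain ⟨h, rfl⟩ := hg
  by_contra hne
  have hh : h ≠ 0 := by rintro rfl; simp at hne
  obtain ⟨e, he, hmax⟩ := Finset.exists_max_image h.support
    (fun e => e (Sum.inl (Sum.inl ()))) (support_nonempty.mpr hh)
  have hc : coeff (e + pr (Sum.inl ())) (JB k α β c * h) = -(α : ℂ) * coeff e h := by
    rw [JB_eq, add_mul, neg_mul, Finset.sum_mul, coeff_add, coeff_neg, coeff_sum,
      add_comm e, coeff_monomial_mul, Finset.sum_eq_zero]
    · ring
    · intro r _
      rw [coeff_monomial_mul']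
      split_ifs with hle
      · have : coeff (pr (Sum.inl ()) + e - pr (Sum.inr r)) h = 0 := by
          by_contra hco
          have := hmax _ (mem_support_iff.mpr hco)
          rw [Finsupp.tsub_apply, Finsupp.add_apply, pr_self, pr_ne (by simp)] at this
          omega
        rw [this, mul_zero]
      · rfl
  have hα' : (α : ℂ) ≠ 0 := by exact_mod_cast hα.ne'
  have := hfree _ (mem_support_iff.mpr (by
    rw [hc]; exact mul_ne_zero (neg_ne_zero.mpr hα') (mem_support_iff.mp he)))
  rw [Finsupp.add_apply, Finsupp.add_apply, ← pr_inl_eq, pr_self] at this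
  omega

theorem piE_free (ha : ∀ i, 0 < a i) (hn : ∀ i, 0 < n i)
    (e : (Fin ℓ ⊕ Fin k) ⊕ (Fin ℓ ⊕ Fin k) →₀ ℕ) (he : e ∈ NA a n c) :
    piE e (Sum.inl (Sum.inl ())) = 0 ∨ piE e (Sum.inr (Sum.inl ())) = 0 := by
  obtain ⟨hw, hno⟩ := he
  rcases le_total 0 (wS c e) with h | h
  · right
    change ∑ i, e (Sum.inr (Sum.inl i)) = 0
    refine Finset.sum_eq_zero fun i _ => ?_
    rcases hno i with h1 | h1
    · have h2 := hw i
      unfold wA at h2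
      rw [h1] at h2
      have h3 : (0 : ℤ) ≤ n i * wS c e := by positivity
      have h4 : (0 : ℤ) < a i := by exact_mod_cast ha i
      have h5 : (e (Sum.inr (Sum.inl i)) : ℤ) ≤ 0 := by
        by_contra hlt
        push Not at hlt
        have := mul_pos h4 hlt
        push_cast at h2
        linarith
      omega
    · exact h1
  · left
    change ∑ i, e (Sum.inl (Sum.inl i)) = 0
    refine Finset.sum_eq_zero fun i _ => ?_
    rcases hno i with h1 | h1
    · exact h1
    · have h2 := hw i
      unfold wA at h2
      rw [h1] at h2
      have h3 : (n i : ℤ) * wS c e ≤ 0 := mul_nonpos_of_nonneg_of_nonpos (by positivity) h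
      have h4 : (0 : ℤ) < a i := by exact_mod_cast ha i
      have h5 : (e (Sum.inl (Sum.inl i)) : ℤ) ≤ 0 := by
        by_contra hlt
        push Not at hlt
        have := mul_pos h4 hlt
        push_cast at h2
        linarith
      omega

theorem piE_inj (ha : ∀ i, 0 < a i)
    (e e' : (Fin ℓ ⊕ Fin k) ⊕ (Fin ℓ ⊕ Fin k) →₀ ℕ) (he : e ∈ NA a n c) (he' : e' ∈ NA a n c)
    (h : piE e = piE e') : e = e' := by
  have hS : wS c e = wS c e' := by rw [← wS_piE, ← wS_piE, h]
  have key : ∀ i, e (Sum.inl (Sum.inl i)) = e' (Sum.inl (Sum.inl i)) ∧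
      e (Sum.inr (Sum.inl i)) = e' (Sum.inr (Sum.inl i)) := by
    intro i
    have h1 := he.1 i
    have h2 := he'.1 i
    unfold wA at h1 h2
    rw [hS] at h1
    have h4 : (a i : ℤ) ≠ 0 := by exact_mod_cast (ha i).ne'
    have h5 : ((e (Sum.inr (Sum.inl i)) : ℤ) - e (Sum.inl (Sum.inl i))) =
      ((e' (Sum.inr (Sum.inl i)) : ℤ) - e' (Sum.inl (Sum.inl i))) :=
      mul_left_cancel₀ h4 (by linear_combination h1 - h2)
    have h6 := he.2 i
    have h7 := he'.2 i
    omega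
  ext x
  rcases x with (i | r) | (i | r)
  · exact (key i).1
  · exact DFunLike.congr_fun h (Sum.inl (Sum.inr r))
  · exact (key i).2
  · exact DFunLike.congr_fun h (Sum.inr (Sum.inr r))

theorem coeff_phi (ha : ∀ i, 0 < a i) (m : Fin ℓ → ℕ) (β : ℕ) (f : PA ℓ k)
    (hf : f ∈ restrictSupport ℂ (NA a n c))
    (e : (Fin ℓ ⊕ Fin k) ⊕ (Fin ℓ ⊕ Fin k) →₀ ℕ) (he : e ∈ f.support) :
    coeff (piE e) (phiStar ℓ k m β f) = kap m β e * coeff e f := by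
  classical
  rw [mem_restrictSupport_iff] at hf
  conv_lhs => rw [f.as_sum, map_sum]
  simp only [phi_monomial, coeff_sum, coeff_monomial]
  rw [Finset.sum_eq_single e, if_pos rfl]
  · intro e' h1 h2
    rw [if_neg]
    intro h3
    exact h2 (piE_inj a n c ha e' e (hf h1) (hf he) h3)
  · intro h; exact absurd he h

theorem phi_support (m : Fin ℓ → ℕ) (β : ℕ) (f : PA ℓ k) (x) (hx : x ∈ (phiStar ℓ k m β f).support) :
    ∃ e ∈ f.support, x = piE e := by
  classical
  by_contra hcon
  push Not at hcon
  rw [mem_support_iff] at hx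
  apply hx
  rw [f.as_sum, map_sum]
  simp only [phi_monomial, coeff_sum, coeff_monomial]
  exact Finset.sum_eq_zero fun e he => if_neg fun h => hcon e he h.symm

theorem injA (ha : ∀ i, 0 < a i) (hn : ∀ i, 0 < n i) (α : ℕ) (hα : 0 < α) (m : Fin ℓ → ℕ)
    (hm0 : ∀ i, 0 < m i) (β : ℕ) (hβ : 0 < β) (f : PA ℓ k)
    (hf : f ∈ restrictSupport ℂ (NA a n c)) (h : JB k α β c ∣ phiStar ℓ k m β f) : f = 0 := by
  have h0 : phiStar ℓ k m β f = 0 := by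
    refine JB_free c α β hα _ h fun x hx => ?_
    obtain ⟨e, he, rfl⟩ := phi_support m β f x hx
    exact piE_free a n c ha hn e ((mem_restrictSupport_iff ℂ).mp hf he)
  rw [← support_eq_empty, Finset.eq_empty_iff_forall_notMem]
  intro e he
  have := coeff_phi a n c ha m β f hf e he
  rw [h0, coeff_zero] at this
  exact mul_ne_zero (kap_ne m hm0 β hβ e) (mem_support_iff.mp he) this.symm

theorem phi_hom (m : Fin ℓ → ℕ) (β d : ℕ) (f : PA ℓ k) (hf : f.IsHomogeneous d) :
    (phiStar ℓ k m β f).IsHomogeneous d := by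
  have : (phiStar ℓ k m β f).IsHomogeneous (1 * d) := by
    refine hf.aeval _ ?_
    rintro ((i | r) | (i | r))
    · exact isHomogeneous_C_mul_X _ _
    · exact isHomogeneous_X _ _
    · exact isHomogeneous_C_mul_X _ _
    · exact isHomogeneous_X _ _
  rwa [one_mul] at this

end

theorem arith {ℓ : ℕ} (a n : Fin ℓ → ℕ) (ha : ∀ i, 0 < a i)
    (hF1 : ∀ i j, i ≠ j → Nat.gcd (a i) (a j) = 1) (hF2 : ∀ i, Nat.Coprime (a i) (n i)) :
    Nat.Coprime (Finset.univ.lcm a) (∑ i, n i * Finset.univ.lcm a / a i) := by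
  classical
  have hα : Finset.univ.lcm a = ∏ i, a i := Finset.lcm_eq_prod (fun i _ j _ h => hF1 i j h)
  have hm : ∀ i, n i * Finset.univ.lcm a / a i = n i * ∏ j ∈ Finset.univ.erase i, a j := by
    intro i
    rw [hα, ← Finset.mul_prod_erase Finset.univ a (Finset.mem_univ i)]
    apply Nat.div_eq_of_eq_mul_left (ha i)
    ring
  simp only [hm]
  rw [hα]
  refine Nat.Coprime.prod_left fun i _ => ?_
  rw [← Finset.add_sum_erase Finset.univ _ (Finset.mem_univ i)]
  have hd : a i ∣ ∑ x ∈ Finset.univ.erase i, n x * ∏ j ∈ Finset.univ.erase x, a j := by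
    refine Finset.dvd_sum fun x hx => Dvd.dvd.mul_left (Finset.dvd_prod_of_mem a ?_) _
    simp only [Finset.mem_erase, Finset.mem_univ, and_true] at hx ⊢
    exact Ne.symm hx
  obtain ⟨q, hq⟩ := hd
  rw [hq, Nat.coprime_add_mul_left_right]
  refine Nat.Coprime.mul_right (hF2 i) (Nat.Coprime.prod_right fun j hj => hF1 i j ?_)
  simp only [Finset.mem_erase, Finset.mem_univ, and_true] at hj
  exact Ne.symm hj

theorem partC {ℓ k : ℕ} (a n : Fin ℓ → ℕ) (c : Fin k → ℕ)
    (ha : ∀ i, 0 < a i) (hn : ∀ i, 0 < n i) (α : ℕ) (hα : 0 < α) (m : Fin ℓ → ℕ)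
    (hm0 : ∀ i, 0 < m i) (hβ : 0 < ∑ i, m i)
    (hm : ∀ i, m i * a i = n i * α) (hcop : Nat.Coprime α (∑ i, m i)) :
    (∃ Φ : (invPA ℓ k a n c ⧸ idealA ℓ k a n c) ≃ₐ[ℂ]
            (invPB k α (∑ i, m i) c ⧸ idealB k α (∑ i, m i) c),
      (∀ (f : invPA ℓ k a n c) (g : invPB k α (∑ i, m i) c),
          phiStar ℓ k m (∑ i, m i) (f : PA ℓ k) = (g : PB k) →
          Φ (Ideal.Quotient.mk (idealA ℓ k a n c) f)
            = Ideal.Quotient.mk (idealB k α (∑ i, m i) c) g)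
      ∧
      (∀ d : ℕ,
        Φ '' (Ideal.Quotient.mk (idealA ℓ k a n c) ''
            {f : invPA ℓ k a n c | ((f : PA ℓ k)).IsHomogeneous d})
          = Ideal.Quotient.mk (idealB k α (∑ i, m i) c) ''
            {g : invPB k α (∑ i, m i) c | ((g : PB k)).IsHomogeneous d})) := by
  have hinv := phi_inv a n c ha α m hm
  have hJ := phi_JA a n c α m hm (∑ i, m i) hβ
  have hred := reduceB a n c ha α hα m hm0 hβ hm hcop
  have hinj := fun f => injA a n c ha hn α hα m hm0 (∑ i, m i) hβ f
  have hhom := phi_hom (k := k) m (∑ i, m i)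
  generalize (∑ i, m i) = β at *
  let ψ : invPA ℓ k a n c →ₐ[ℂ] invPB k α β c :=
    ((phiStar ℓ k m β).comp (invPA ℓ k a n c).val).codRestrict _ (fun f => hinv f f.2)
  have hψ : ∀ f, ((ψ f : invPB k α β c) : PB k) = phiStar ℓ k m β (f : PA ℓ k) := fun f => rfl
  have hle : idealA ℓ k a n c ≤ (idealB k α β c).comap ψ := by
    conv_lhs => unfold idealA
    rw [Ideal.span_le]
    rintro f ⟨i, hi⟩
    rw [SetLike.mem_coe, Ideal.mem_comap, ← mem_IB, hψ, hi, hJ]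
    exact mul_JB_mem _ _ _ _ (Subalgebra.algebraMap_mem _ _)
  let Φ₀ : (invPA ℓ k a n c ⧸ idealA ℓ k a n c) →ₐ[ℂ] (invPB k α β c ⧸ idealB k α β c) :=
    Ideal.quotientMapₐ _ ψ hle
  have hΦ₀ : ∀ f, Φ₀ (Ideal.Quotient.mk _ f) = Ideal.Quotient.mk _ (ψ f) := fun f => rfl
  have hsur : ∀ (d : ℕ) (g : invPB k α β c), (g : PB k).IsHomogeneous d →
      ∃ f : invPA ℓ k a n c, (f : PA ℓ k).IsHomogeneous d ∧
        Φ₀ (Ideal.Quotient.mk _ f) = Ideal.Quotient.mk _ g := by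
    intro d g hg
    obtain ⟨f, hf, hfd, h⟩ := hred d g g.2 hg
    refine ⟨⟨f, hf⟩, hfd, ?_⟩
    rw [hΦ₀, eq_comm, Ideal.Quotient.eq, ← mem_IB]
    exact h
  have hbij : Function.Bijective Φ₀ := by
    constructor
    · rw [injective_iff_map_eq_zero]
      intro x hx
      obtain ⟨f, rfl⟩ := Ideal.Quotient.mk_surjective x
      rw [hΦ₀, Ideal.Quotient.eq_zero_iff_mem, ← mem_IB, hψ] at hx
      rw [Ideal.Quotient.eq_zero_iff_mem, ← mem_IA]
      obtain ⟨f', hf', y, hy, hfy⟩ := Submodule.mem_sup.mp (reduceA a n c ha f f.2)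
      obtain ⟨y, hy1, rfl⟩ := hy
      have h1 : phiStar ℓ k m β (y : PA ℓ k) ∈ IB c α β := by
        rw [← hψ, mem_IB]; exact hle hy1
      have h2 : phiStar ℓ k m β f' ∈ IB c α β := by
        have : phiStar ℓ k m β f' = phiStar ℓ k m β (f : PA ℓ k) - phiStar ℓ k m β (y : PA ℓ k) := by
          rw [← hfy, map_add]; simp
        rw [this]; exact Submodule.sub_mem _ hx h1
      have h3 := hinj f' hf' (IB_dvd c α β _ h2)
      rw [← hfy, h3, zero_add]
      exact ⟨y, hy1, rfl⟩
    · intro y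
      obtain ⟨g, rfl⟩ := Ideal.Quotient.mk_surjective y
      have hcomp : ∀ d, homogeneousComponent d (g : PB k) ∈ invPB k α β c := by
        intro d
        have := g.2
        rw [mem_invPB] at this ⊢
        intro e he
        refine this e ?_
        rw [mem_support_iff, coeff_homogeneousComponent] at he
        rw [mem_support_iff]
        intro h0
        rw [h0] at he
        simp at he
      have hg : g = ∑ d ∈ Finset.range ((g : PB k).totalDegree + 1),
          (⟨homogeneousComponent d (g : PB k), hcomp d⟩ : invPB k α β c) := by
        apply Subtype.ext
        rw [AddSubmonoidClass.coe_finsetSum]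
        exact (sum_homogeneousComponent _).symm
      rw [hg, map_sum]
      choose F _ hF using fun d => hsur d ⟨homogeneousComponent d (g : PB k), hcomp d⟩
        (homogeneousComponent_isHomogeneous d _)
      exact ⟨∑ d ∈ Finset.range ((g : PB k).totalDegree + 1), Ideal.Quotient.mk _ (F d), by
        rw [map_sum]; exact Finset.sum_congr rfl fun d _ => hF d⟩
  refine ⟨AlgEquiv.ofBijective Φ₀ hbij, ?_, ?_⟩
  · intro f g h
    rw [AlgEquiv.ofBijective_apply, hΦ₀]
    congr 1
    exact Subtype.ext h
  · intro d
    ext y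
    constructor
    · rintro ⟨_, ⟨f, hf, rfl⟩, rfl⟩
      refine ⟨ψ f, ?_, ?_⟩
      · exact hhom d _ hf
      · rw [AlgEquiv.ofBijective_apply, hΦ₀]
    · rintro ⟨g, hg, rfl⟩
      obtain ⟨f, hf, h⟩ := hsur d g hg
      exact ⟨_, ⟨f, hf, rfl⟩, by rw [AlgEquiv.ofBijective_apply, h]⟩

/-- (a) `φ*` maps invariants to invariants; (b) `φ*(J_{A,i}) = (n_i/β)·J_B`;
(c) `φ*` induces a degree-preserving isomorphism of graded ℂ-algebras
`P_A^{inv}/(J_{A,1},…,J_{A,ℓ}) → P_B^{inv}/(J_B)`. -/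
theorem stmt9 (ℓ k : ℕ) (hℓ : 1 ≤ ℓ) (hk : 1 ≤ k)
    (a n : Fin ℓ → ℕ) (c : Fin k → ℕ)
    (ha : ∀ i, 0 < a i) (hn : ∀ i, 0 < n i) (hc : ∀ r, 0 < c r)
    (hF1 : ∀ i j, i ≠ j → Nat.gcd (a i) (a j) = 1)
    (hF2 : ∀ i, ∃ r, Nat.gcd (a i) (c r * n i) = 1) :
    let α : ℕ := Finset.univ.lcm a
    let m : Fin ℓ → ℕ := fun i => n i * α / a i
    let β : ℕ := ∑ i, m i
    -- (a)
    (∀ f : PA ℓ k, f ∈ invPA ℓ k a n c → phiStar ℓ k m β f ∈ invPB k α β c)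
    ∧
    -- (b)
    (∀ i, phiStar ℓ k m β (JA ℓ k a n c i) = C ((n i : ℂ) / (β : ℂ)) * JB k α β c)
    ∧
    -- (c)
    (∃ Φ : (invPA ℓ k a n c ⧸ idealA ℓ k a n c) ≃ₐ[ℂ]
            (invPB k α β c ⧸ idealB k α β c),
      (∀ (f : invPA ℓ k a n c) (g : invPB k α β c),
          phiStar ℓ k m β (f : PA ℓ k) = (g : PB k) →
          Φ (Ideal.Quotient.mk (idealA ℓ k a n c) f)
            = Ideal.Quotient.mk (idealB k α β c) g)
      ∧
      (∀ d : ℕ,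
        Φ '' (Ideal.Quotient.mk (idealA ℓ k a n c) ''
            {f : invPA ℓ k a n c | ((f : PA ℓ k)).IsHomogeneous d})
          = Ideal.Quotient.mk (idealB k α β c) ''
            {g : invPB k α β c | ((g : PB k)).IsHomogeneous d})) := by
  intro α m β
  have hα : 0 < α := by
    rw [Nat.pos_iff_ne_zero]
    intro h
    obtain ⟨i, _, hi⟩ := Finset.lcm_eq_zero_iff.mp h
    exact (ha i).ne' hi
  have hdvd : ∀ i, a i ∣ α := fun i => Finset.dvd_lcm (Finset.mem_univ i)
  have hm : ∀ i, m i * a i = n i * α := fun i =>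
    Nat.div_mul_cancel (Dvd.dvd.mul_left (hdvd i) _)
  have hm0 : ∀ i, 0 < m i := by
    intro i
    have : 0 < m i * a i := by rw [hm]; exact Nat.mul_pos (hn i) hα
    exact Nat.pos_of_mul_pos_right this
  have hβ : 0 < ∑ i, m i :=
    Finset.sum_pos (fun i _ => hm0 i) ⟨⟨0, hℓ⟩, Finset.mem_univ _⟩
  have hcop : Nat.Coprime α (∑ i, m i) := arith a n ha hF1 fun i => by
    obtain ⟨r, hr⟩ := hF2 i
    exact Nat.Coprime.coprime_mul_left_right hr
  exact ⟨phi_inv a n c ha α m hm, phi_JA a n c α m hm _ hβ,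
    partC a n c ha hn α hα m hm0 hβ hm hcop⟩
end

section
/- Assume Type I_k (c_1 = ⋯ = c_k = 1) and the faithfulness condition (F). Let n = ℓ + k and P = ℂ[z_1,…,z_n, w_1,…,w_n]. Then the subalgebra P^{inv} of (ℂ^×)^ℓ-invariant polynomials equals the ℂ-subalgebra of P generated by the following monomials: (1) r_i = z_i w_i for i = 1,…,ℓ; (2) p_{g,h} = z_{ℓ+g} w_{ℓ+h} for 1 ≤ g,h ≤ k; (3) q_s = (∏_{i=1}^ℓ z_i^{m_i})·(∏_{g=1}^k z_{ℓ+g}^{s_g}) for each s = (s_1,…,s_k) ∈ ℕ^k with s_1 + ⋯ + s_k = α; (4) q̄_s = (∏_{i=1}^ℓ w_i^{m_i})·(∏_{g=1}^k w_{ℓ+g}^{s_g}) for each such s. -/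
open Complex MvPolynomial

/-- The polynomial ring `P = ℂ[z, w]` with `z, w` each indexed by `Fin ℓ ⊕ Fin k`
(the left summand of the variable type is `z`, the right is `w`). -/
abbrev PP (ℓ k : ℕ) := MvPolynomial ((Fin ℓ ⊕ Fin k) ⊕ (Fin ℓ ⊕ Fin k)) ℂ

/-- The substitution action of `t ∈ (ℂ^×)^ℓ` on `P` for the Type I_k weight matrix
`A = [diag(-a_1,…,-a_ℓ), n, …, n]`: `z_i ↦ t_i^{-a_i} z_i`, `w_i ↦ t_i^{a_i} w_i`,
`z_{ℓ+g} ↦ (∏_i t_i^{n_i}) z_{ℓ+g}`, `w_{ℓ+g} ↦ (∏_i t_i^{n_i})⁻¹ w_{ℓ+g}`. -/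
noncomputable def actP (ℓ k : ℕ) (a n : Fin ℓ → ℕ) (t : Fin ℓ → ℂ) :
    PP ℓ k →ₐ[ℂ] PP ℓ k :=
  aeval fun x => match x with
    | Sum.inl (Sum.inl i) => C (t i ^ (-(a i : ℤ))) * X (Sum.inl (Sum.inl i))
    | Sum.inl (Sum.inr g) => C (∏ i, t i ^ n i) * X (Sum.inl (Sum.inr g))
    | Sum.inr (Sum.inl i) => C (t i ^ (a i : ℤ)) * X (Sum.inr (Sum.inl i))
    | Sum.inr (Sum.inr g) => C ((∏ i, t i ^ n i)⁻¹) * X (Sum.inr (Sum.inr g))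

/-- The generating monomials: `r_i = z_i w_i`; `p_{g,h} = z_{ℓ+g} w_{ℓ+h}`;
`q_s = (∏_i z_i^{m_i})(∏_g z_{ℓ+g}^{s_g})` and `q̄_s = (∏_i w_i^{m_i})(∏_g w_{ℓ+g}^{s_g})`
for `s ∈ ℕ^k` with `|s| = α`. -/
noncomputable def gens (ℓ k : ℕ) (α : ℕ) (m : Fin ℓ → ℕ) : Set (PP ℓ k) :=
  {f | ∃ i, f = X (Sum.inl (Sum.inl i)) * X (Sum.inr (Sum.inl i))} ∪
  {f | ∃ g h : Fin k, f = X (Sum.inl (Sum.inr g)) * X (Sum.inr (Sum.inr h))} ∪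
  {f | ∃ s : Fin k → ℕ, (∑ g, s g) = α ∧
      f = (∏ i, X (Sum.inl (Sum.inl i)) ^ m i) * ∏ g, X (Sum.inl (Sum.inr g)) ^ s g} ∪
  {f | ∃ s : Fin k → ℕ, (∑ g, s g) = α ∧
      f = (∏ i, X (Sum.inr (Sum.inl i)) ^ m i) * ∏ g, X (Sum.inr (Sum.inr g)) ^ s g}

theorem aux_coeff {σ : Type*} [Fintype σ] (c : σ → ℂ) (f : MvPolynomial σ ℂ) (d : σ →₀ ℕ) :
    coeff d (aeval (fun x => C (c x) * X x : σ → MvPolynomial σ ℂ) f)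
      = (∏ x, c x ^ d x) * coeff d f := by
  classical
  induction f using MvPolynomial.induction_on' with
  | monomial u r =>
    have : aeval (fun x => C (c x) * X x : σ → MvPolynomial σ ℂ) (monomial u r)
        = monomial u ((∏ x, c x ^ u x) * r) := by
      rw [aeval_monomial, Finsupp.prod_fintype _ _ (by simp)]
      simp only [mul_pow, Finset.prod_mul_distrib]
      rw [monomial_eq (s := u), Finsupp.prod_fintype _ _ (by simp)]
      simp only [algebraMap_eq, map_mul, map_prod, map_pow]
      ring
    rw [this, coeff_monomial, coeff_monomial]
    split_ifs with h
    · rw [h]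
    · simp
  | add p q hp hq => simp only [map_add, coeff_add, hp, hq, mul_add]

noncomputable def monE {ℓ k : ℕ} (p q : Fin ℓ → ℕ) (u v : Fin k → ℕ) : PP ℓ k :=
  (∏ i, X (Sum.inl (Sum.inl i)) ^ p i) * (∏ g, X (Sum.inl (Sum.inr g)) ^ u g) *
  ((∏ i, X (Sum.inr (Sum.inl i)) ^ q i) * (∏ g, X (Sum.inr (Sum.inr g)) ^ v g))

theorem monE_add {ℓ k : ℕ} (p q p' q' : Fin ℓ → ℕ) (u v u' v' : Fin k → ℕ) :
    monE (p + p') (q + q') (u + u') (v + v') = monE p q u v * monE p' q' u' v' := by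
  simp only [monE, Pi.add_apply, pow_add, Finset.prod_mul_distrib]
  ring

theorem exists_sub {k : ℕ} (u : Fin k → ℕ) (α : ℕ) (h : α ≤ ∑ g, u g) :
    ∃ s t : Fin k → ℕ, u = s + t ∧ ∑ g, s g = α := by
  induction α with
  | zero => exact ⟨0, u, by simp, by simp⟩
  | succ b ih =>
    obtain ⟨s, t, rfl, hs⟩ := ih (by omega)
    have : ∃ g, t g ≠ 0 := by
      by_contra! hc
      simp [hc, hs] at h
    obtain ⟨g, hg⟩ := this
    refine ⟨s + Pi.single g 1, t - Pi.single g 1, ?_, ?_⟩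
    · ext j
      rcases eq_or_ne j g with rfl | hj
      · simp; omega
      · simp [hj]
    · simp [Finset.sum_add_distrib, hs]

theorem exists_single {k : ℕ} (u : Fin k → ℕ) (h : ∑ g, u g ≠ 0) :
    ∃ g, ∃ t : Fin k → ℕ, u = Pi.single g 1 + t := by
  have : ∃ g, u g ≠ 0 := by
    by_contra! hc
    simp [hc] at h
  obtain ⟨g, hg⟩ := this
  refine ⟨g, u - Pi.single g 1, ?_⟩
  ext j
  rcases eq_or_ne j g with rfl | hj
  · simp; omega
  · simp [hj]

theorem arith_aux {ℓ : ℕ} (a n : Fin ℓ → ℕ) (ha : ∀ i, 0 < a i)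
    (hF2 : ∀ i, Nat.gcd (a i) (n i) = 1) (p q : Fin ℓ → ℕ) (U : ℕ) (hU : U ≠ 0)
    (h : ∀ i, a i * p i = a i * q i + n i * U) :
    Finset.univ.lcm a ≤ U ∧
      ∀ i, n i * Finset.univ.lcm a / a i ≤ p i := by
  have h1 : Finset.univ.lcm a ≤ U := by
    apply Nat.le_of_dvd (Nat.pos_of_ne_zero hU)
    apply Finset.lcm_dvd
    intro i _
    have : a i ∣ n i * U := by
      rw [← Nat.dvd_add_right (Dvd.intro (q i) rfl : a i ∣ a i * q i), ← h i]
      exact Dvd.intro _ rfl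
    exact Nat.Coprime.dvd_of_dvd_mul_left (hF2 i) this
  refine ⟨h1, fun i => ?_⟩
  apply Nat.div_le_of_le_mul
  rw [h i]
  exact le_add_left (Nat.mul_le_mul_left _ h1)

theorem a_mul_m {ℓ : ℕ} (a n : Fin ℓ → ℕ) (i : Fin ℓ) :
    a i * (n i * Finset.univ.lcm a / a i) = n i * Finset.univ.lcm a :=
  Nat.mul_div_cancel' (Dvd.dvd.mul_left (Finset.dvd_lcm (Finset.mem_univ i)) _)

theorem sum_zero_fun {k : ℕ} (u : Fin k → ℕ) (h : ∑ g, u g = 0) : u = 0 := by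
  ext g
  exact (Finset.sum_eq_zero_iff.mp h) g (Finset.mem_univ g)

theorem monE_mem {ℓ k : ℕ} (a n : Fin ℓ → ℕ) (ha : ∀ i, 0 < a i)
    (hF2 : ∀ i, Nat.gcd (a i) (n i) = 1) (N : ℕ) :
    ∀ (p q : Fin ℓ → ℕ) (u v : Fin k → ℕ), ∑ g, u g + ∑ g, v g = N →
    (∀ i, a i * p i + n i * ∑ g, v g = a i * q i + n i * ∑ g, u g) →
    monE p q u v ∈ Algebra.adjoin ℂ
      (gens ℓ k (Finset.univ.lcm a) (fun i => n i * Finset.univ.lcm a / a i)) := by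
  have hα : Finset.univ.lcm a ≠ 0 := by
    rw [Ne, Finset.lcm_eq_zero_iff]
    rintro ⟨i, _, hi⟩
    exact (ha i).ne' hi
  induction N using Nat.strong_induction_on with
  | _ N ih =>
  intro p q u v hN h
  by_cases hu : ∑ g, u g = 0
  · by_cases hv : ∑ g, v g = 0
    · have hpq : p = q := by
        ext i
        have := h i
        rw [hu, hv] at this
        exact Nat.eq_of_mul_eq_mul_left (ha i) (by simpa using this)
      subst hpq
      rw [sum_zero_fun u hu, sum_zero_fun v hv]
      have : monE p p (0 : Fin k → ℕ) 0 =
          ∏ i, ((X (Sum.inl (Sum.inl i)) * X (Sum.inr (Sum.inl i)) : PP ℓ k)) ^ p i := by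
        simp [monE, mul_pow, Finset.prod_mul_distrib]
      rw [this]
      refine Subalgebra.prod_mem _ fun i _ => Subalgebra.pow_mem _ ?_ _
      exact Algebra.subset_adjoin (Or.inl (Or.inl (Or.inl ⟨i, rfl⟩)))
    · have hA := arith_aux a n ha hF2 q p _ hv (fun i => by have := h i; simp [hu] at this; omega)
      obtain ⟨s, t, rfl, hs⟩ := exists_sub v _ hA.1
      obtain ⟨q', hq'⟩ : ∃ q', q = (fun i => n i * Finset.univ.lcm a / a i) + q' :=
        ⟨fun i => q i - n i * Finset.univ.lcm a / a i, by
          ext i; have := hA.2 i; simp; omega⟩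
      have e : monE p q u (s + t) =
          monE 0 (fun i => n i * Finset.univ.lcm a / a i) 0 s * monE p q' u t := by
        rw [← monE_add, hq']; simp
      have hst : ∑ g, (s + t) g = Finset.univ.lcm a + ∑ g, t g := by
        simp [Finset.sum_add_distrib, hs]
      rw [e]
      refine Subalgebra.mul_mem _ (Algebra.subset_adjoin (Or.inr ⟨s, hs, by simp [monE]⟩)) ?_
      refine ih _ ?_ p q' u t rfl ?_
      · omega
      · intro i
        have h1 := h i
        have h2 := a_mul_m a n i
        rw [hst, hq'] at h1
        simp only [Pi.add_apply, mul_add] at h1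
        omega
  · by_cases hv : ∑ g, v g = 0
    · have hA := arith_aux a n ha hF2 p q _ hu (fun i => by have := h i; simp [hv] at this; omega)
      obtain ⟨s, t, rfl, hs⟩ := exists_sub u _ hA.1
      obtain ⟨p', hp'⟩ : ∃ p', p = (fun i => n i * Finset.univ.lcm a / a i) + p' :=
        ⟨fun i => p i - n i * Finset.univ.lcm a / a i, by
          ext i; have := hA.2 i; simp; omega⟩
      have e : monE p q (s + t) v =
          monE (fun i => n i * Finset.univ.lcm a / a i) 0 s 0 * monE p' q t v := by
        rw [← monE_add, hp']; simp
      have hst : ∑ g, (s + t) g = Finset.univ.lcm a + ∑ g, t g := by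
        simp [Finset.sum_add_distrib, hs]
      rw [e]
      refine Subalgebra.mul_mem _
        (Algebra.subset_adjoin (Or.inl (Or.inr ⟨s, hs, by simp [monE]⟩))) ?_
      refine ih _ ?_ p' q t v rfl ?_
      · omega
      · intro i
        have h1 := h i
        have h2 := a_mul_m a n i
        rw [hst, hp'] at h1
        simp only [Pi.add_apply, mul_add] at h1
        omega
    · obtain ⟨g, t, rfl⟩ := exists_single u hu
      obtain ⟨g', t', rfl⟩ := exists_single v hv
      have e : monE p q (Pi.single g 1 + t) (Pi.single g' 1 + t') =
          monE 0 0 (Pi.single g 1) (Pi.single g' 1) * monE p q t t' := by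
        rw [← monE_add]; simp
      have h1 : ∑ x, (Pi.single g 1 + t : Fin k → ℕ) x = 1 + ∑ x, t x := by
        simp [Finset.sum_add_distrib]
      have h2 : ∑ x, (Pi.single g' 1 + t' : Fin k → ℕ) x = 1 + ∑ x, t' x := by
        simp [Finset.sum_add_distrib]
      rw [e]
      refine Subalgebra.mul_mem _ (Algebra.subset_adjoin
        (Or.inl (Or.inl (Or.inr ⟨g, g', ?_⟩)))) ?_
      · simp [monE, Pi.single_apply, pow_ite]
      · refine ih _ ?_ p q t t' rfl ?_
        · omega
        · intro i
          have h3 := h i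
          rw [h1, h2] at h3
          simp only [mul_add] at h3
          omega

noncomputable def chr (ℓ k : ℕ) (a n : Fin ℓ → ℕ) (t : Fin ℓ → ℂ) :
    (Fin ℓ ⊕ Fin k) ⊕ (Fin ℓ ⊕ Fin k) → ℂ := fun x => match x with
    | Sum.inl (Sum.inl i) => t i ^ (-(a i : ℤ))
    | Sum.inl (Sum.inr _) => ∏ i, t i ^ n i
    | Sum.inr (Sum.inl i) => t i ^ (a i : ℤ)
    | Sum.inr (Sum.inr _) => (∏ i, t i ^ n i)⁻¹

theorem actP_eq (ℓ k : ℕ) (a n : Fin ℓ → ℕ) (t : Fin ℓ → ℂ) :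
    actP ℓ k a n t = aeval (fun x => C (chr ℓ k a n t x) * X x) := by
  unfold actP
  congr 1
  funext x
  rcases x with (i | g) | (i | g) <;> rfl

theorem weight_of_inv (ℓ k : ℕ) (a n : Fin ℓ → ℕ) (f : PP ℓ k)
    (hf : ∀ t : Fin ℓ → ℂ, (∀ i, t i ≠ 0) → actP ℓ k a n t f = f)
    (d : (Fin ℓ ⊕ Fin k) ⊕ (Fin ℓ ⊕ Fin k) →₀ ℕ) (hd : coeff d f ≠ 0) (i : Fin ℓ) :
    a i * d (Sum.inl (Sum.inl i)) + n i * ∑ g, d (Sum.inr (Sum.inr g))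
      = a i * d (Sum.inr (Sum.inl i)) + n i * ∑ g, d (Sum.inl (Sum.inr g)) := by
  classical
  have h2 : ∀ j, (Pi.mulSingle i 2 : Fin ℓ → ℂ) j ≠ 0 := by
    intro j
    rcases eq_or_ne j i with rfl | hj <;> simp [*]
  have h := hf (Pi.mulSingle i 2) h2
  rw [actP_eq] at h
  have h3 := aux_coeff (chr ℓ k a n (Pi.mulSingle i 2)) f d
  rw [h] at h3
  have h4 : (∏ x, chr ℓ k a n (Pi.mulSingle i 2) x ^ d x) = 1 :=
    (mul_right_cancel₀ hd (by rw [one_mul]; exact h3)).symm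
  have e1 : (∏ j, (Pi.mulSingle i 2 : Fin ℓ → ℂ) j ^ n j) = 2 ^ n i := by
    rw [Finset.prod_eq_single i]
    · simp
    · intro j _ hj; simp [hj]
    · simp
  have e2 : ∏ j, ((Pi.mulSingle i 2 : Fin ℓ → ℂ) j ^ (a j)) ^ d (Sum.inr (Sum.inl j))
      = 2 ^ (a i * d (Sum.inr (Sum.inl i))) := by
    rw [Finset.prod_eq_single i]
    · simp [pow_mul]
    · intro j _ hj; simp [hj]
    · simp
  have e3 : ∏ j, ((Pi.mulSingle i 2 : Fin ℓ → ℂ) j ^ (a j)) ^ d (Sum.inl (Sum.inl j))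
      = 2 ^ (a i * d (Sum.inl (Sum.inl i))) := by
    rw [Finset.prod_eq_single i]
    · simp [pow_mul]
    · intro j _ hj; simp [hj]
    · simp
  simp only [Fintype.prod_sum_type, chr, e1, zpow_neg, zpow_natCast, inv_pow,
    Finset.prod_inv_distrib, e2, e3, Finset.prod_pow_eq_pow_sum] at h4
  simp only [← pow_mul] at h4
  have h5 : (2 : ℂ) ^ (a i * d (Sum.inl (Sum.inl i)) + n i * ∑ g, d (Sum.inr (Sum.inr g)))
      = 2 ^ (a i * d (Sum.inr (Sum.inl i)) + n i * ∑ g, d (Sum.inl (Sum.inr g))) := by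
    rw [pow_add, pow_add]
    have n1 : (2 : ℂ) ^ (a i * d (Sum.inl (Sum.inl i))) ≠ 0 := pow_ne_zero _ two_ne_zero
    have n2 : (2 : ℂ) ^ (n i * ∑ g, d (Sum.inr (Sum.inr g))) ≠ 0 := pow_ne_zero _ two_ne_zero
    generalize (2 : ℂ) ^ (a i * d (Sum.inl (Sum.inl i))) = A at *
    generalize (2 : ℂ) ^ (n i * ∑ g, d (Sum.inr (Sum.inr g))) = B at *
    field_simp at h4
    linear_combination -h4
  have h6 : (2 : ℕ) ^ (a i * d (Sum.inl (Sum.inl i)) + n i * ∑ g, d (Sum.inr (Sum.inr g)))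
      = 2 ^ (a i * d (Sum.inr (Sum.inl i)) + n i * ∑ g, d (Sum.inl (Sum.inr g))) := by
    exact_mod_cast h5
  exact Nat.pow_right_injective le_rfl h6

theorem actP_monE (ℓ k : ℕ) (a n : Fin ℓ → ℕ) (t : Fin ℓ → ℂ) (ht : ∀ i, t i ≠ 0)
    (p q : Fin ℓ → ℕ) (u v : Fin k → ℕ)
    (h : ∀ i, a i * p i + n i * ∑ g, v g = a i * q i + n i * ∑ g, u g) :
    actP ℓ k a n t (monE p q u v) = monE p q u v := by
  have hs : (∏ i, (t i ^ (-(a i : ℤ))) ^ p i) * (∏ i, t i ^ n i) ^ (∑ g, u g) *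
      ((∏ i, (t i ^ (a i : ℤ)) ^ q i) * ((∏ i, t i ^ n i)⁻¹) ^ (∑ g, v g)) = 1 := by
    rw [← Finset.prod_inv_distrib, ← Finset.prod_pow, ← Finset.prod_pow,
      ← Finset.prod_mul_distrib, ← Finset.prod_mul_distrib, ← Finset.prod_mul_distrib]
    refine Finset.prod_eq_one fun i _ => ?_
    have h1 : t i ^ (a i * p i + n i * ∑ g, v g) = t i ^ (a i * q i + n i * ∑ g, u g) := by
      rw [h i]
    rw [pow_add, pow_add] at h1
    have := ht i
    simp only [zpow_neg, zpow_natCast, inv_pow, ← pow_mul]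
    field_simp
    linear_combination -h1
  have key : actP ℓ k a n t (monE p q u v) = C ((∏ i, (t i ^ (-(a i : ℤ))) ^ p i) *
      (∏ i, t i ^ n i) ^ (∑ g, u g) *
      ((∏ i, (t i ^ (a i : ℤ)) ^ q i) * ((∏ i, t i ^ n i)⁻¹) ^ (∑ g, v g))) *
      monE p q u v := by
    rw [actP_eq]
    simp only [monE, map_mul, map_prod, map_pow, aeval_X, chr, mul_pow,
      Finset.prod_mul_distrib, Finset.prod_pow_eq_pow_sum]
    ring
  rw [key, hs]; simp

theorem monomial_monE {ℓ k : ℕ} (d : (Fin ℓ ⊕ Fin k) ⊕ (Fin ℓ ⊕ Fin k) →₀ ℕ) (c : ℂ) :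
    (monomial d c : PP ℓ k) = c • monE (fun i => d (Sum.inl (Sum.inl i)))
      (fun i => d (Sum.inr (Sum.inl i))) (fun i => d (Sum.inl (Sum.inr i)))
      (fun i => d (Sum.inr (Sum.inr i))) := by
  rw [monomial_eq, Finsupp.prod_fintype _ _ (by simp), smul_eq_C_mul]
  simp only [Fintype.prod_sum_type, monE]

/-- for a faithful Type I_k weight matrix, a polynomial is
`(ℂ^×)^ℓ`-invariant if and only if it lies in the subalgebra generated by the monomials
`r_i`, `p_{g,h}`, `q_s`, `q̄_s`. -/
theorem stmt10 (ℓ k : ℕ) (hℓ : 1 ≤ ℓ) (hk : 1 ≤ k)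
    (a n : Fin ℓ → ℕ)
    (ha : ∀ i, 0 < a i) (hn : ∀ i, 0 < n i)
    (hF1 : ∀ i j, i ≠ j → Nat.gcd (a i) (a j) = 1)
    (hF2 : ∀ i, Nat.gcd (a i) (n i) = 1) :
    let α : ℕ := Finset.univ.lcm a
    let m : Fin ℓ → ℕ := fun i => n i * α / a i
    ∀ f : PP ℓ k,
      (∀ t : Fin ℓ → ℂ, (∀ i, t i ≠ 0) → actP ℓ k a n t f = f)
        ↔ f ∈ Algebra.adjoin ℂ (gens ℓ k α m) := by
  intro α m f
  constructor
  · intro hf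
    rw [f.as_sum]
    refine Subalgebra.sum_mem _ fun d hd => ?_
    rw [monomial_monE]
    refine Subalgebra.smul_mem _ ?_ _
    exact monE_mem a n ha hF2 _ _ _ _ _ rfl
      (fun i => weight_of_inv ℓ k a n f hf d (mem_support_iff.mp hd) i)
  · intro hf t ht
    have hle : Algebra.adjoin ℂ (gens ℓ k α m) ≤
        AlgHom.equalizer (actP ℓ k a n t) (AlgHom.id ℂ (PP ℓ k)) := by
      rw [Algebra.adjoin_le_iff]
      have hm : ∀ i, a i * m i = n i * α := fun i => a_mul_m a n i
      have fin : ∀ (f : PP ℓ k) (p q : Fin ℓ → ℕ) (u v : Fin k → ℕ), f = monE p q u v →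
          (∀ i, a i * p i + n i * ∑ g, v g = a i * q i + n i * ∑ g, u g) →
          f ∈ AlgHom.equalizer (actP ℓ k a n t) (AlgHom.id ℂ (PP ℓ k)) := by
        intro f p q u v h1 h2
        rw [AlgHom.mem_equalizer, h1, actP_monE ℓ k a n t ht p q u v h2]
        rfl
      rintro f (((⟨i, rfl⟩ | ⟨g, h, rfl⟩) | ⟨s, hs, rfl⟩) | ⟨s, hs, rfl⟩)
      · exact fin _ (Pi.single i 1) (Pi.single i 1) 0 0
          (by simp [monE, Pi.single_apply, pow_ite]) (fun j => by simp)
      · exact fin _ 0 0 (Pi.single g 1) (Pi.single h 1)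
          (by simp [monE, Pi.single_apply, pow_ite]) (fun j => by simp)
      · exact fin _ m 0 s 0 (by simp [monE]) (fun j => by simp [hm, hs])
      · exact fin _ 0 m 0 s (by simp [monE]) (fun j => by simp [hm, hs])
    exact hle hf
end

section
/- Assume Type I_k (c_1 = ⋯ = c_k = 1) and the faithfulness condition (F). Let F be the polynomial ring over ℂ in the variables R_i (i = 1,…,ℓ), P_{g,h} (1 ≤ g,h ≤ k), Q_s and Q̄_s (s ∈ ℕ^k with |s| = α), and let π : F → ℂ[z_1,…,z_n, w_1,…,w_n] (n = ℓ+k) be the ℂ-algebra homomorphism with π(R_i) = z_i w_i, π(P_{g,h}) = z_{ℓ+g} w_{ℓ+h}, π(Q_s) = (∏_{i=1}^ℓ z_i^{m_i})(∏_{g=1}^k z_{ℓ+g}^{s_g}), and π(Q̄_s) = (∏_{i=1}^ℓ w_i^{m_i})(∏_{g=1}^k w_{ℓ+g}^{s_g}). Then the kernel of π is the ideal of F generated by: (1) P_{g,h}P_{i,j} − P_{g,j}P_{i,h} for all g ≠ i and h ≠ j; (2) P_{g,h}Q_s − P_{i,h}Q_{s′} for all g, h, i and all s with s_i ≥ 1,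 where s′ = s + e_g − e_i; (3) P_{g,h}Q̄_s − P_{g,i}Q̄_{s′} for all g, h, i and all s with s_i ≥ 1, where s′ = s + e_h − e_i; (4) Q_sQ_{s′} − Q_tQ_{t′} whenever s + s′ = t + t′; (5) Q̄_sQ̄_{s′} − Q̄_tQ̄_{t′} whenever s + s′ = t + t′; (6) (∏_{i=1}^ℓ R_i^{m_i})(∏_{j=1}^α P_{g_j,h_j}) − Q_sQ̄_{s′} whenever the list (g_1,…,g_α) contains each value g exactly s_g times and the list (h_1,…,h_α) contains each value h exactly s′_h times. -/
open Complex MvPolynomial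

/-- Exponent vectors `s ∈ ℕ^k` with `|s| = α`. -/
abbrev Expo (k α : ℕ) := {s : Fin k → ℕ // ∑ g, s g = α}

/-- The free polynomial ring `F` on the variables `R_i`, `P_{g,h}`, `Q_s`, `Q̄_s`. -/
abbrev FreeP (ℓ k α : ℕ) :=
  MvPolynomial (Fin ℓ ⊕ ((Fin k × Fin k) ⊕ (Expo k α ⊕ Expo k α))) ℂ

/-- The evaluation `π : F → ℂ[z,w]` sending `R_i ↦ z_i w_i`, `P_{g,h} ↦ z_{ℓ+g} w_{ℓ+h}`,
`Q_s ↦ (∏_i z_i^{m_i})(∏_g z_{ℓ+g}^{s_g})`, `Q̄_s ↦ (∏_i w_i^{m_i})(∏_g w_{ℓ+g}^{s_g})`. -/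
noncomputable def piMap (ℓ k α : ℕ) (m : Fin ℓ → ℕ) :
    FreeP ℓ k α →ₐ[ℂ] PP ℓ k :=
  aeval fun x => match x with
    | Sum.inl i => X (Sum.inl (Sum.inl i)) * X (Sum.inr (Sum.inl i))
    | Sum.inr (Sum.inl (g, h)) => X (Sum.inl (Sum.inr g)) * X (Sum.inr (Sum.inr h))
    | Sum.inr (Sum.inr (Sum.inl s)) =>
        (∏ i, X (Sum.inl (Sum.inl i)) ^ m i) * ∏ g, X (Sum.inl (Sum.inr g)) ^ s.1 g
    | Sum.inr (Sum.inr (Sum.inr s)) =>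
        (∏ i, X (Sum.inr (Sum.inl i)) ^ m i) * ∏ g, X (Sum.inr (Sum.inr g)) ^ s.1 g

/-- The variable `R_i` of `F`. -/
noncomputable def Rv (ℓ k α : ℕ) (i : Fin ℓ) : FreeP ℓ k α := X (Sum.inl i)

/-- The variable `P_{g,h}` of `F`. -/
noncomputable def Pv (ℓ k α : ℕ) (g h : Fin k) : FreeP ℓ k α :=
  X (Sum.inr (Sum.inl (g, h)))

/-- The variable `Q_s` of `F`. -/
noncomputable def Qv (ℓ k α : ℕ) (s : Expo k α) : FreeP ℓ k α :=
  X (Sum.inr (Sum.inr (Sum.inl s)))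

/-- The variable `Q̄_s` of `F`. -/
noncomputable def Qbv (ℓ k α : ℕ) (s : Expo k α) : FreeP ℓ k α :=
  X (Sum.inr (Sum.inr (Sum.inr s)))

/-- The six families of off-shell relations. -/
noncomputable def rels (ℓ k α : ℕ) (m : Fin ℓ → ℕ) : Set (FreeP ℓ k α) :=
  -- (1)
  {f | ∃ g h i j : Fin k, g ≠ i ∧ h ≠ j ∧
      f = Pv ℓ k α g h * Pv ℓ k α i j - Pv ℓ k α g j * Pv ℓ k α i h} ∪
  -- (2)  s' = s + e_g - e_i, s_i ≥ 1
  {f | ∃ (g h i : Fin k) (s s' : Expo k α), 1 ≤ s.1 i ∧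
      (∀ j, s'.1 j + (if j = i then 1 else 0) = s.1 j + (if j = g then 1 else 0)) ∧
      f = Pv ℓ k α g h * Qv ℓ k α s - Pv ℓ k α i h * Qv ℓ k α s'} ∪
  -- (3)  s' = s + e_h - e_i, s_i ≥ 1
  {f | ∃ (g h i : Fin k) (s s' : Expo k α), 1 ≤ s.1 i ∧
      (∀ j, s'.1 j + (if j = i then 1 else 0) = s.1 j + (if j = h then 1 else 0)) ∧
      f = Pv ℓ k α g h * Qbv ℓ k α s - Pv ℓ k α g i * Qbv ℓ k α s'} ∪
  -- (4)
  {f | ∃ s s' t t' : Expo k α, (∀ j, s.1 j + s'.1 j = t.1 j + t'.1 j) ∧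
      f = Qv ℓ k α s * Qv ℓ k α s' - Qv ℓ k α t * Qv ℓ k α t'} ∪
  -- (5)
  {f | ∃ s s' t t' : Expo k α, (∀ j, s.1 j + s'.1 j = t.1 j + t'.1 j) ∧
      f = Qbv ℓ k α s * Qbv ℓ k α s' - Qbv ℓ k α t * Qbv ℓ k α t'} ∪
  -- (6)
  {f | ∃ (s s' : Expo k α) (g h : Fin α → Fin k),
      (∀ x, (Finset.univ.filter fun j => g j = x).card = s.1 x) ∧
      (∀ x, (Finset.univ.filter fun j => h j = x).card = s'.1 x) ∧
      f = (∏ i, Rv ℓ k α i ^ m i) * (∏ j, Pv ℓ k α (g j) (h j))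
            - Qv ℓ k α s * Qbv ℓ k α s'}


theorem aux_prod_pair {T M : Type*} [Fintype T] [DecidableEq T] [CommMonoid M] (f f' : T → M)
    (i j : T) (hij : i ≠ j) (h : ∀ t, t ≠ i → t ≠ j → f t = f' t)
    (h2 : f i * f j = f' i * f' j) : ∏ t, f t = ∏ t, f' t := by
  have key : ∀ f : T → M, ∏ t, f t = (f i * f j) * ∏ t ∈ (Finset.univ.erase i).erase j, f t := by
    intro f
    rw [← Finset.mul_prod_erase Finset.univ f (Finset.mem_univ i),
      ← Finset.mul_prod_erase (Finset.univ.erase i) f (a := j) (by simp [hij.symm]), mul_assoc]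
  rw [key f, key f', h2]
  congr 1
  apply Finset.prod_congr rfl
  intro t ht
  simp at ht
  exact h t ht.2 ht.1

/-- the factor -/
def auxFac {n q α : ℕ} {ι M : Type*} (p : Fin n → ι → M) (Q : (Fin α → ι) → M)
    (u : Fin n ⊕ Fin q × Fin α → ι) : Fin n ⊕ Fin q → M
  | Sum.inl j => p j (u (Sum.inl j))
  | Sum.inr b => Q (fun x => u (Sum.inr (b, x)))

theorem aux_swap {n q α : ℕ} {ι M : Type*} [CommMonoid M] (p : Fin n → ι → M)
    (Q : (Fin α → ι) → M)
    (h1 : ∀ i j a b, p i a * p j b = p i b * p j a)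
    (h2 : ∀ j a t x, p j a * Q t = p j (t x) * Q (Function.update t x a))
    (h3 : ∀ t x y, Q (t ∘ Equiv.swap x y) = Q t)
    (h4 : ∀ t t' x y, Q t * Q t' = Q (Function.update t x (t' y)) * Q (Function.update t' y (t x)))
    (u : Fin n ⊕ Fin q × Fin α → ι) (x y : Fin n ⊕ Fin q × Fin α) :
    ∏ t, auxFac p Q (u ∘ Equiv.swap x y) t = ∏ t, auxFac p Q u t := by
  have e1 : ∀ (b : Fin q) (x : Fin α) (j : Fin n),
      (fun x' => (u ∘ Equiv.swap (Sum.inl j) (Sum.inr (b, x))) (Sum.inr (b, x'))) =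
      Function.update (fun x' => u (Sum.inr (b, x'))) x (u (Sum.inl j)) := by
    intro b x j
    funext x'
    by_cases hx : x' = x
    · subst hx; simp
    · simp [hx, Equiv.swap_apply_of_ne_of_ne]
  have mixed : ∀ (j : Fin n) (b : Fin q) (x : Fin α),
      ∏ t, auxFac p Q (u ∘ Equiv.swap (Sum.inl j) (Sum.inr (b, x))) t = ∏ t, auxFac p Q u t := by
    intro j b x
    apply aux_prod_pair _ _ (Sum.inl j) (Sum.inr b) (by simp)
    · rintro (i | b') hi hb
      · have : i ≠ j := by simpa using hi
        simp [auxFac, this, Equiv.swap_apply_of_ne_of_ne]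
      · have : b' ≠ b := by simpa using hb
        simp [auxFac, this, Equiv.swap_apply_of_ne_of_ne]
    · simp only [auxFac, e1]
      rw [h2 j (u (Sum.inl j)) (fun x' => u (Sum.inr (b, x'))) x]
      simp
  rcases x with i | ⟨b, x⟩ <;> rcases y with j | ⟨b', y⟩
  · by_cases hij : i = j
    · subst hij; simp
    apply aux_prod_pair _ _ (Sum.inl i) (Sum.inl j) (by simpa using hij)
    · rintro (t | b) hi hj
      · have h1 : t ≠ i := by simpa using hi
        have h2 : t ≠ j := by simpa using hj
        simp [auxFac, h1, h2, Equiv.swap_apply_of_ne_of_ne]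
      · simp [auxFac, Equiv.swap_apply_of_ne_of_ne]
    · simp [auxFac]; exact h1 _ _ _ _
  · exact mixed _ _ _
  · rw [Equiv.swap_comm]; exact mixed _ _ _
  · by_cases hb : b = b'
    · subst hb
      apply Finset.prod_congr rfl
      rintro (t | b') -
      · simp [auxFac, Equiv.swap_apply_of_ne_of_ne]
      · by_cases hb : b' = b
        · subst hb
          simp only [auxFac]
          rw [← h3 (fun x' => u (Sum.inr (b', x'))) x y]
          congr 1
          funext z
          simp only [Function.comp, Equiv.swap_apply_def]
          by_cases hzx : z = x
          · simp [hzx]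
          · by_cases hzy : z = y
            · subst hzy; simp [hzx]
            · simp [hzx, hzy]
        · simp [auxFac, hb, Equiv.swap_apply_of_ne_of_ne]
    · apply aux_prod_pair _ _ (Sum.inr b) (Sum.inr b') (by simpa using hb)
      · rintro (t | c) hi hj
        · simp [auxFac, Equiv.swap_apply_of_ne_of_ne]
        · have h1 : c ≠ b := by simpa using hi
          have h2 : c ≠ b' := by simpa using hj
          simp [auxFac, h1, h2, Equiv.swap_apply_of_ne_of_ne]
      · simp only [auxFac]
        rw [h4 (fun x' => u (Sum.inr (b, x'))) (fun x' => u (Sum.inr (b', x'))) x y]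
        have hb' : ¬ b' = b := fun h => hb h.symm
        congr 2
        · funext z
          by_cases hz : z = x
          · subst hz; simp
          · simp [hz, hb, Equiv.swap_apply_of_ne_of_ne]
        · funext z
          by_cases hz : z = y
          · subst hz; simp
          · simp [hz, hb', Equiv.swap_apply_of_ne_of_ne]

theorem aux_perm {n q α : ℕ} {ι M : Type*} [CommMonoid M] (p : Fin n → ι → M)
    (Q : (Fin α → ι) → M)
    (h1 : ∀ i j a b, p i a * p j b = p i b * p j a)
    (h2 : ∀ j a t x, p j a * Q t = p j (t x) * Q (Function.update t x a))
    (h3 : ∀ t x y, Q (t ∘ Equiv.swap x y) = Q t)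
    (h4 : ∀ t t' x y, Q t * Q t' = Q (Function.update t x (t' y)) * Q (Function.update t' y (t x)))
    (σ : Equiv.Perm (Fin n ⊕ Fin q × Fin α)) : ∀ (u : Fin n ⊕ Fin q × Fin α → ι),
    ∏ t, auxFac p Q (u ∘ σ) t = ∏ t, auxFac p Q u t := by
  induction σ using Equiv.Perm.swap_induction_on with
  | one => intro u; simp
  | swap_mul f x y hxy ih =>
    intro u
    rw [Equiv.Perm.coe_mul, ← Function.comp_assoc, ih, aux_swap p Q h1 h2 h3 h4]

/-- counts -/
def auxCnt {k α : ℕ} (t : Fin α → Fin k) : Expo k α :=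
  ⟨fun g => (Finset.univ.filter fun j => t j = g).card, by
    rw [← Finset.card_eq_sum_card_fiberwise (fun x _ => by simp)]; simp⟩

theorem auxCnt_surj {k α : ℕ} (s : Expo k α) : ∃ t, auxCnt t = s := by
  obtain ⟨s, hs⟩ := s
  have e : Fin α ≃ Σ g : Fin k, Fin (s g) := Fintype.equivOfCardEq (by simp [hs])
  refine ⟨fun j => (e j).1, Subtype.ext (funext fun g => ?_)⟩
  simp only [auxCnt]
  rw [← Fintype.card_subtype]
  have e2 : {j // (e j).1 = g} ≃ {y : Σ g : Fin k, Fin (s g) // y.1 = g} :=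
    e.subtypeEquiv (fun _ => Iff.rfl)
  rw [Fintype.card_congr (e2.trans (Equiv.sigmaSubtype g))]
  simp

theorem auxCnt_swap {k α : ℕ} (t : Fin α → Fin k) (x y) :
    auxCnt (t ∘ Equiv.swap x y) = auxCnt t := by
  refine Subtype.ext (funext fun g => ?_)
  simp only [auxCnt]
  rw [← Fintype.card_subtype, ← Fintype.card_subtype]
  exact Fintype.card_congr ((Equiv.swap x y).subtypeEquiv (fun _ => Iff.rfl))

theorem auxCnt_update {k α : ℕ} (t : Fin α → Fin k) (x a) (j) :
    (auxCnt (Function.update t x a)).1 j + (if j = t x then 1 else 0) =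
      (auxCnt t).1 j + (if j = a then 1 else 0) := by
  simp only [auxCnt, Finset.card_filter]
  rw [← Finset.add_sum_erase _ _ (Finset.mem_univ x),
    ← Finset.add_sum_erase Finset.univ (fun i => if t i = j then 1 else 0) (Finset.mem_univ x)]
  have : ∑ i ∈ Finset.univ.erase x, (if Function.update t x a i = j then 1 else 0) =
     ∑ i ∈ Finset.univ.erase x, (if t i = j then 1 else 0) := by
    apply Finset.sum_congr rfl
    intro i hi
    simp at hi
    simp [hi]
  rw [this]
  simp only [Function.update_self, eq_comm (a := j)]
  ring

theorem aux_exists_perm {D ι : Type*} [Fintype D] [DecidableEq ι] (u u' : D → ι)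
    (h : ∀ g, (Finset.univ.filter fun x => u x = g).card =
      (Finset.univ.filter fun x => u' x = g).card) :
    ∃ σ : Equiv.Perm D, u' = u ∘ σ := by
  have h' : ∀ g, Nonempty ({x // u' x = g} ≃ {x // u x = g}) := fun g => by
    rw [← Fintype.card_eq, Fintype.card_subtype, Fintype.card_subtype, h]
  have e := fun g => Classical.choice (h' g)
  refine ⟨Equiv.ofFiberEquiv e, ?_⟩
  funext x
  exact (Equiv.ofFiberEquiv_map e x).symm

section
variable {ℓ k α : ℕ}

/-- normal form -/
noncomputable def auxNF (c : Fin ℓ → ℕ) {n q q' : ℕ} (pu pv : Fin n → Fin k)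
    (S : Fin q → Expo k α) (S' : Fin q' → Expo k α) : FreeP ℓ k α :=
  (∏ i, Rv ℓ k α i ^ c i) * (∏ j, Pv ℓ k α (pu j) (pv j)) * (∏ b, Qv ℓ k α (S b)) *
    ∏ b, Qbv ℓ k α (S' b)

/-- the quotient map -/
noncomputable abbrev auxMk (ℓ k α : ℕ) (m : Fin ℓ → ℕ) :
    FreeP ℓ k α →+* FreeP ℓ k α ⧸ Ideal.span (rels ℓ k α m) :=
  Ideal.Quotient.mk _

theorem auxMk_eq (m : Fin ℓ → ℕ) {x y : FreeP ℓ k α} (h : x - y ∈ rels ℓ k α m) :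
    auxMk ℓ k α m x = auxMk ℓ k α m y :=
  Ideal.Quotient.eq.2 (Ideal.subset_span h)

theorem auxR1 (m : Fin ℓ → ℕ) (g h i j : Fin k) :
    auxMk ℓ k α m (Pv ℓ k α g h) * auxMk ℓ k α m (Pv ℓ k α i j) =
    auxMk ℓ k α m (Pv ℓ k α g j) * auxMk ℓ k α m (Pv ℓ k α i h) := by
  by_cases h1 : g = i
  · subst h1; exact mul_comm _ _
  by_cases h2 : h = j
  · subst h2; rfl
  rw [← map_mul, ← map_mul]
  apply auxMk_eq
  simp only [rels, Set.mem_union]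
  exact Or.inl (Or.inl (Or.inl (Or.inl (Or.inl ⟨g, h, i, j, h1, h2, rfl⟩))))

theorem aux_cnt_pos (t : Fin α → Fin k) (x) : 1 ≤ (auxCnt t).1 (t x) := by
  simp only [auxCnt]
  exact Finset.card_pos.2 ⟨x, by simp⟩

theorem auxR2 (m : Fin ℓ → ℕ) (g h : Fin k) (t : Fin α → Fin k) (x) :
    auxMk ℓ k α m (Pv ℓ k α g h) * auxMk ℓ k α m (Qv ℓ k α (auxCnt t)) =
    auxMk ℓ k α m (Pv ℓ k α (t x) h) *
      auxMk ℓ k α m (Qv ℓ k α (auxCnt (Function.update t x g))) := by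
  rw [← map_mul, ← map_mul]
  apply auxMk_eq
  simp only [rels, Set.mem_union]
  exact Or.inl (Or.inl (Or.inl (Or.inl (Or.inr ⟨g, h, t x, _, _, aux_cnt_pos t x,
    auxCnt_update t x g, rfl⟩))))

theorem auxR3 (m : Fin ℓ → ℕ) (g h : Fin k) (t : Fin α → Fin k) (x) :
    auxMk ℓ k α m (Pv ℓ k α g h) * auxMk ℓ k α m (Qbv ℓ k α (auxCnt t)) =
    auxMk ℓ k α m (Pv ℓ k α g (t x)) *
      auxMk ℓ k α m (Qbv ℓ k α (auxCnt (Function.update t x h))) := by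
  rw [← map_mul, ← map_mul]
  apply auxMk_eq
  simp only [rels, Set.mem_union]
  exact Or.inl (Or.inl (Or.inl (Or.inr ⟨g, h, t x, _, _, aux_cnt_pos t x,
    auxCnt_update t x h, rfl⟩)))

theorem aux_cnt_two (t t' : Fin α → Fin k) (x y) (j) : (auxCnt t).1 j + (auxCnt t').1 j =
    (auxCnt (Function.update t x (t' y))).1 j + (auxCnt (Function.update t' y (t x))).1 j := by
  have h1 := auxCnt_update t x (t' y) j
  have h2 := auxCnt_update t' y (t x) j
  omega

theorem auxR4 (m : Fin ℓ → ℕ) (t t' : Fin α → Fin k) (x y) :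
    auxMk ℓ k α m (Qv ℓ k α (auxCnt t)) * auxMk ℓ k α m (Qv ℓ k α (auxCnt t')) =
    auxMk ℓ k α m (Qv ℓ k α (auxCnt (Function.update t x (t' y)))) *
      auxMk ℓ k α m (Qv ℓ k α (auxCnt (Function.update t' y (t x)))) := by
  rw [← map_mul, ← map_mul]
  apply auxMk_eq
  simp only [rels, Set.mem_union]
  exact Or.inl (Or.inl (Or.inr ⟨_, _, _, _, aux_cnt_two t t' x y, rfl⟩))

theorem auxR5 (m : Fin ℓ → ℕ) (t t' : Fin α → Fin k) (x y) :
    auxMk ℓ k α m (Qbv ℓ k α (auxCnt t)) * auxMk ℓ k α m (Qbv ℓ k α (auxCnt t')) =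
    auxMk ℓ k α m (Qbv ℓ k α (auxCnt (Function.update t x (t' y)))) *
      auxMk ℓ k α m (Qbv ℓ k α (auxCnt (Function.update t' y (t x)))) := by
  rw [← map_mul, ← map_mul]
  apply auxMk_eq
  simp only [rels, Set.mem_union]
  exact Or.inl (Or.inr ⟨_, _, _, _, aux_cnt_two t t' x y, rfl⟩)

theorem auxR6 (m : Fin ℓ → ℕ) (t t' : Fin α → Fin k) :
    auxMk ℓ k α m (Qv ℓ k α (auxCnt t)) * auxMk ℓ k α m (Qbv ℓ k α (auxCnt t')) =
    auxMk ℓ k α m (∏ i, Rv ℓ k α i ^ m i) * auxMk ℓ k α m (∏ j, Pv ℓ k α (t j) (t' j)) := by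
  rw [← map_mul, ← map_mul]
  symm
  apply auxMk_eq
  simp only [rels, Set.mem_union]
  exact Or.inr ⟨_, _, t, t', fun _ => rfl, fun _ => rfl, rfl⟩

theorem aux_exists_NF (m : Fin ℓ → ℕ)
    (d : (Fin ℓ ⊕ ((Fin k × Fin k) ⊕ (Expo k α ⊕ Expo k α))) →₀ ℕ) :
    ∃ (c : Fin ℓ → ℕ) (n q q' : ℕ) (pu pv : Fin n → Fin k)
      (S : Fin q → Expo k α) (S' : Fin q' → Expo k α), (q = 0 ∨ q' = 0) ∧
      auxMk ℓ k α m (monomial d 1) = auxMk ℓ k α m (auxNF c pu pv S S') := by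
  classical
  obtain ⟨s, rfl⟩ := Multiset.toFinsupp.surjective d
  induction s using Multiset.induction_on with
  | empty =>
    exact ⟨0, 0, 0, 0, Fin.elim0, Fin.elim0, Fin.elim0, Fin.elim0, Or.inl rfl, by simp [auxNF]⟩
  | cons x s ih =>
    obtain ⟨c, n, q, q', pu, pv, S, S', h0, h⟩ := ih
    have hx : (monomial (Multiset.toFinsupp (x ::ₘ s)) 1 : FreeP ℓ k α) =
        X x * monomial (Multiset.toFinsupp s) 1 := by
      rw [← Multiset.singleton_add, map_add, Multiset.toFinsupp_singleton, X, monomial_mul,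
        one_mul]
    rw [hx, map_mul, h]
    have hred : ∀ (t t' : Fin α → Fin k) {r r' : ℕ} (U : Fin r → Expo k α)
        (U' : Fin r' → Expo k α),
        auxMk ℓ k α m (auxNF c pu pv U U') * (auxMk ℓ k α m (Qv ℓ k α (auxCnt t)) *
        auxMk ℓ k α m (Qbv ℓ k α (auxCnt t'))) =
        auxMk ℓ k α m (auxNF (m + c) (Fin.append t pu) (Fin.append t' pv) U U') := by
      intro t t' r r' U U'
      rw [auxR6, ← map_mul, ← map_mul]
      refine congrArg (auxMk ℓ k α m) ?_
      simp only [auxNF, Fin.prod_univ_add, Fin.append_left, Fin.append_right, Pi.add_apply,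
        pow_add, Finset.prod_mul_distrib]
      ring
    rcases x with i | ⟨g, g'⟩ | w | w
    · refine ⟨Pi.single i 1 + c, n, q, q', pu, pv, S, S', h0, ?_⟩
      rw [← map_mul]
      refine congrArg (auxMk ℓ k α m) ?_
      have : ∏ j, Rv ℓ k α j ^ (Pi.single i 1 : Fin ℓ → ℕ) j = Rv ℓ k α i := by
        rw [Finset.prod_eq_single i]
        · simp
        · intro b _ hb; simp [hb]
        · simp
      simp only [auxNF, Pi.add_apply, pow_add, Finset.prod_mul_distrib, this]
      simp only [Rv]
      ring
    · refine ⟨c, n + 1, q, q', Fin.cons g pu, Fin.cons g' pv, S, S', h0, ?_⟩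
      rw [← map_mul]
      refine congrArg (auxMk ℓ k α m) ?_
      simp only [auxNF, Fin.prod_univ_succ, Fin.cons_zero, Fin.cons_succ]
      simp only [Pv]
      ring
    · rcases q' with _ | q'
      · refine ⟨c, n, q + 1, 0, pu, pv, Fin.cons w S, S', Or.inr rfl, ?_⟩
        rw [← map_mul]
        refine congrArg (auxMk ℓ k α m) ?_
        simp only [auxNF, Fin.prod_univ_succ, Fin.cons_zero, Fin.cons_succ]
        simp only [Qv]
        ring
      · obtain ⟨t, rfl⟩ := auxCnt_surj w
        obtain ⟨t', ht'⟩ := auxCnt_surj (S' 0)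
        refine ⟨m + c, α + n, q, q', Fin.append t pu, Fin.append t' pv, S, fun b => S' b.succ,
          by omega, ?_⟩
        rw [← hred, ht', ← map_mul, ← map_mul, ← map_mul]
        refine congrArg (auxMk ℓ k α m) ?_
        simp only [auxNF, Fin.prod_univ_succ]
        simp only [Qv]
        ring
    · rcases q with _ | q
      · refine ⟨c, n, 0, q' + 1, pu, pv, S, Fin.cons w S', Or.inl rfl, ?_⟩
        rw [← map_mul]
        refine congrArg (auxMk ℓ k α m) ?_
        simp only [auxNF, Fin.prod_univ_succ, Fin.cons_zero, Fin.cons_succ]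
        simp only [Qbv]
        ring
      · obtain ⟨t', rfl⟩ := auxCnt_surj w
        obtain ⟨t, ht⟩ := auxCnt_surj (S 0)
        refine ⟨m + c, α + n, q, q', Fin.append t pu, Fin.append t' pv, fun b => S b.succ, S',
          by omega, ?_⟩
        rw [← hred, ht, ← map_mul, ← map_mul, ← map_mul]
        refine congrArg (auxMk ℓ k α m) ?_
        simp only [auxNF, Fin.prod_univ_succ]
        simp only [Qbv]
        ring

theorem aux_NF_perm (m : Fin ℓ → ℕ) (c : Fin ℓ → ℕ) {n q q' : ℕ}
    (u u' : Fin n ⊕ Fin q × Fin α → Fin k) (v v' : Fin n ⊕ Fin q' × Fin α → Fin k)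
    (hu : ∃ σ : Equiv.Perm _, u' = u ∘ σ) (hv : ∃ σ : Equiv.Perm _, v' = v ∘ σ) :
    auxMk ℓ k α m (auxNF c (fun j => u (Sum.inl j)) (fun j => v (Sum.inl j))
      (fun b => auxCnt fun x => u (Sum.inr (b, x))) (fun b => auxCnt fun x => v (Sum.inr (b, x)))) =
    auxMk ℓ k α m (auxNF c (fun j => u' (Sum.inl j)) (fun j => v' (Sum.inl j))
      (fun b => auxCnt fun x => u' (Sum.inr (b, x)))
      (fun b => auxCnt fun x => v' (Sum.inr (b, x)))) := by
  obtain ⟨σ, rfl⟩ := hu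
  obtain ⟨τ, rfl⟩ := hv
  have A := aux_perm (q := q) (fun (j : Fin n) a => auxMk ℓ k α m (Pv ℓ k α a (v (Sum.inl j))))
    (fun t => auxMk ℓ k α m (Qv ℓ k α (auxCnt t)))
    (fun i j a b => by rw [auxR1, mul_comm])
    (fun j a t x => auxR2 m _ _ t x)
    (fun t x y => by rw [auxCnt_swap]) (fun t t' x y => auxR4 m t t' x y) σ u
  have B := aux_perm (q := q')
    (fun (j : Fin n) a => auxMk ℓ k α m (Pv ℓ k α ((u ∘ σ) (Sum.inl j)) a))
    (fun t => auxMk ℓ k α m (Qbv ℓ k α (auxCnt t)))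
    (fun i j a b => by rw [auxR1])
    (fun j a t x => auxR3 m _ _ t x)
    (fun t x y => by rw [auxCnt_swap]) (fun t t' x y => auxR5 m t t' x y) τ v
  simp only [Fintype.prod_sum_type, auxFac] at A B
  simp only [auxNF, map_mul, map_prod]
  linear_combination (-(∏ x, auxMk ℓ k α m (Rv ℓ k α x ^ c x)) *
    (∏ b, auxMk ℓ k α m (Qbv ℓ k α (auxCnt fun x => v (Sum.inr (b, x)))))) * A -
    ((∏ x, auxMk ℓ k α m (Rv ℓ k α x ^ c x)) *
    (∏ b, auxMk ℓ k α m (Qv ℓ k α (auxCnt fun x => (u ∘ σ) (Sum.inr (b, x)))))) * B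

end

section
variable {ℓ k α : ℕ}

/-- exponents of the image of a variable -/
def auxEf (m : Fin ℓ → ℕ) : Fin ℓ ⊕ ((Fin k × Fin k) ⊕ (Expo k α ⊕ Expo k α)) →
    (Fin ℓ ⊕ Fin k) ⊕ (Fin ℓ ⊕ Fin k) → ℕ
  | Sum.inl i => Sum.elim (Sum.elim (fun j => if j = i then 1 else 0) (fun _ => 0))
      (Sum.elim (fun j => if j = i then 1 else 0) (fun _ => 0))
  | Sum.inr (Sum.inl p) => Sum.elim (Sum.elim (fun _ => 0) (fun g => if g = p.1 then 1 else 0))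
      (Sum.elim (fun _ => 0) (fun g => if g = p.2 then 1 else 0))
  | Sum.inr (Sum.inr (Sum.inl s)) => Sum.elim (Sum.elim m s.1) (fun _ => 0)
  | Sum.inr (Sum.inr (Sum.inr s)) => Sum.elim (fun _ => 0) (Sum.elim m s.1)

/-- as a finsupp -/
noncomputable def auxE (m : Fin ℓ → ℕ) (x : Fin ℓ ⊕ ((Fin k × Fin k) ⊕ (Expo k α ⊕ Expo k α))) :
    (Fin ℓ ⊕ Fin k) ⊕ (Fin ℓ ⊕ Fin k) →₀ ℕ :=
  Finsupp.equivFunOnFinite.symm (auxEf m x)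

theorem auxE_apply (m : Fin ℓ → ℕ) (x : Fin ℓ ⊕ ((Fin k × Fin k) ⊕ (Expo k α ⊕ Expo k α))) (y) :
    auxE m x y = auxEf m x y := rfl

theorem aux_pi_X (m : Fin ℓ → ℕ) (x) : piMap ℓ k α m (X x) = monomial (auxE m x) 1 := by
  rw [monomial_eq, Finsupp.prod_fintype _ _ (by simp)]
  simp only [auxE_apply, piMap, aeval_X, Fintype.prod_sum_type]
  rcases x with i | ⟨g, h⟩ | s | s <;> simp [auxEf]

theorem aux_pi_NF (m c : Fin ℓ → ℕ) {n q q' : ℕ} (pu pv : Fin n → Fin k)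
    (S : Fin q → Expo k α) (S' : Fin q' → Expo k α) :
    piMap ℓ k α m (auxNF c pu pv S S') = monomial
      ((∑ i, c i • auxE m (Sum.inl i : Fin ℓ ⊕ ((Fin k × Fin k) ⊕ (Expo k α ⊕ Expo k α)))) +
       (∑ j, auxE m (Sum.inr (Sum.inl (pu j, pv j)) :
          Fin ℓ ⊕ ((Fin k × Fin k) ⊕ (Expo k α ⊕ Expo k α)))) +
       (∑ b, auxE m (Sum.inr (Sum.inr (Sum.inl (S b))))) +
       (∑ b, auxE m (Sum.inr (Sum.inr (Sum.inr (S' b)))))) 1 := by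
  simp only [auxNF, Rv, Pv, Qv, Qbv, map_mul, map_prod, map_pow, aux_pi_X, monomial_pow, one_pow,
    ← monomial_sum_one, monomial_mul, one_mul]

/-- the exponent map -/
noncomputable def auxPhi (m : Fin ℓ → ℕ)
    (d : (Fin ℓ ⊕ ((Fin k × Fin k) ⊕ (Expo k α ⊕ Expo k α))) →₀ ℕ) :
    (Fin ℓ ⊕ Fin k) ⊕ (Fin ℓ ⊕ Fin k) →₀ ℕ := d.sum fun x e => e • auxE m x

theorem aux_pi_monomial (m : Fin ℓ → ℕ)
    (d : (Fin ℓ ⊕ ((Fin k × Fin k) ⊕ (Expo k α ⊕ Expo k α))) →₀ ℕ) :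
    piMap ℓ k α m (monomial d 1) = monomial (auxPhi m d) 1 := by
  rw [monomial_eq, map_mul, Finsupp.prod, map_prod, auxPhi, Finsupp.sum, monomial_sum_one]
  simp [aux_pi_X, monomial_pow]

theorem aux_rels (m : Fin ℓ → ℕ) : rels ℓ k α m ⊆ RingHom.ker (piMap ℓ k α m).toRingHom := by
  intro f hf
  change piMap ℓ k α m f = 0
  simp only [rels, Set.mem_union] at hf
  rcases hf with ((((hf | hf) | hf) | hf) | hf) | hf
  · obtain ⟨g, h, i, j, -, -, rfl⟩ := hf
    simp only [Pv, map_sub, map_mul, aux_pi_X, monomial_mul, sub_eq_zero]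
    congr 2
    ext y
    rcases y with (y | y) | (y | y) <;> simp [auxE_apply, auxEf]
    omega
  · obtain ⟨g, h, i, s, s', -, hs, rfl⟩ := hf
    simp only [Pv, Qv, map_sub, map_mul, aux_pi_X, monomial_mul, sub_eq_zero]
    congr 2
    ext y
    rcases y with (y | y) | (y | y) <;> simp [auxE_apply, auxEf]
    have := hs y
    omega
  · obtain ⟨g, h, i, s, s', -, hs, rfl⟩ := hf
    simp only [Pv, Qbv, map_sub, map_mul, aux_pi_X, monomial_mul, sub_eq_zero]
    congr 2
    ext y
    rcases y with (y | y) | (y | y) <;> simp [auxE_apply, auxEf]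
    have := hs y
    omega
  · obtain ⟨s, s', t, t', hs, rfl⟩ := hf
    simp only [Qv, map_sub, map_mul, aux_pi_X, monomial_mul, sub_eq_zero]
    congr 2
    ext y
    rcases y with (y | y) | (y | y) <;> simp [auxE_apply, auxEf]
    exact hs y
  · obtain ⟨s, s', t, t', hs, rfl⟩ := hf
    simp only [Qbv, map_sub, map_mul, aux_pi_X, monomial_mul, sub_eq_zero]
    congr 2
    ext y
    rcases y with (y | y) | (y | y) <;> simp [auxE_apply, auxEf]
    exact hs y
  · obtain ⟨s, s', g, h, hg, hh, rfl⟩ := hf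
    simp only [Rv, Pv, Qv, Qbv, map_sub, map_mul, map_prod, map_pow, aux_pi_X, monomial_pow,
      one_pow, ← monomial_sum_one, monomial_mul, sub_eq_zero]
    congr 2
    ext y
    rcases y with (y | y) | (y | y) <;>
      simp [auxE_apply, auxEf, Finsupp.finsetSum_apply, ← hg, ← hh, @eq_comm _ y]

theorem aux_NF_unique (m : Fin ℓ → ℕ) (hℓ : 1 ≤ ℓ) (hm : ∀ i, 1 ≤ m i) (c₁ c₂ : Fin ℓ → ℕ)
    {n₁ n₂ q₁ q₂ q₁' q₂' : ℕ} (pu₁ pv₁ : Fin n₁ → Fin k) (pu₂ pv₂ : Fin n₂ → Fin k)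
    (S₁ : Fin q₁ → Expo k α) (S₁' : Fin q₁' → Expo k α)
    (S₂ : Fin q₂ → Expo k α) (S₂' : Fin q₂' → Expo k α)
    (h₁ : q₁ = 0 ∨ q₁' = 0) (h₂ : q₂ = 0 ∨ q₂' = 0)
    (h : piMap ℓ k α m (auxNF c₁ pu₁ pv₁ S₁ S₁') = piMap ℓ k α m (auxNF c₂ pu₂ pv₂ S₂ S₂')) :
    auxMk ℓ k α m (auxNF c₁ pu₁ pv₁ S₁ S₁') = auxMk ℓ k α m (auxNF c₂ pu₂ pv₂ S₂ S₂') := by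
  rw [aux_pi_NF, aux_pi_NF] at h
  have h := monomial_left_injective (R := ℂ) one_ne_zero h
  have hz : ∀ i, c₁ i + q₁ * m i = c₂ i + q₂ * m i := fun i => by
    have := DFunLike.congr_fun h (Sum.inl (Sum.inl i))
    simpa [auxE_apply, auxEf, Finsupp.finsetSum_apply] using this
  have hw : ∀ i, c₁ i + q₁' * m i = c₂ i + q₂' * m i := fun i => by
    have := DFunLike.congr_fun h (Sum.inr (Sum.inl i))
    simpa [auxE_apply, auxEf, Finsupp.finsetSum_apply] using this
  have hzg : ∀ g, (∑ j, if pu₁ j = g then 1 else 0) + ∑ b, (S₁ b).1 g =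
      (∑ j, if pu₂ j = g then 1 else 0) + ∑ b, (S₂ b).1 g := fun i => by
    have := DFunLike.congr_fun h (Sum.inl (Sum.inr i))
    simpa only [auxE_apply, auxEf, Finsupp.finsetSum_apply, Finsupp.add_apply,
      Finsupp.smul_apply, Sum.elim_inl, Sum.elim_inr, smul_zero, Finset.sum_const_zero, zero_add,
      add_zero, eq_comm (a := i)] using this
  have hwg : ∀ g, (∑ j, if pv₁ j = g then 1 else 0) + ∑ b, (S₁' b).1 g =
      (∑ j, if pv₂ j = g then 1 else 0) + ∑ b, (S₂' b).1 g := fun i => by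
    have := DFunLike.congr_fun h (Sum.inr (Sum.inr i))
    simpa only [auxE_apply, auxEf, Finsupp.finsetSum_apply, Finsupp.add_apply,
      Finsupp.smul_apply, Sum.elim_inl, Sum.elim_inr, smul_zero, Finset.sum_const_zero, zero_add,
      add_zero, eq_comm (a := i)] using this
  clear h
  have hq : q₁ = q₂ ∧ q₁' = q₂' := by
    have h1 := hz ⟨0, hℓ⟩
    have h2 := hw ⟨0, hℓ⟩
    have h3 := hm ⟨0, hℓ⟩
    have h4 : (q₁ + q₂') * m ⟨0, hℓ⟩ = (q₂ + q₁') * m ⟨0, hℓ⟩ := by linarith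
    have h5 := Nat.eq_of_mul_eq_mul_right h3 h4
    omega
  obtain ⟨rfl, rfl⟩ := hq
  obtain rfl : c₁ = c₂ := funext fun i => by have := hz i; omega
  choose t₁ ht₁ using fun b => auxCnt_surj (S₁ b)
  choose t₂ ht₂ using fun b => auxCnt_surj (S₂ b)
  choose t₁' ht₁' using fun b => auxCnt_surj (S₁' b)
  choose t₂' ht₂' using fun b => auxCnt_surj (S₂' b)
  obtain rfl : n₁ = n₂ := by
    have h1 : ∀ {n q : ℕ} (p : Fin n → Fin k) (S : Fin q → Expo k α),
        ∑ g, ((∑ j, if p j = g then 1 else 0) + ∑ b, (S b).1 g) = n + q * α := by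
      intro n q p S
      rw [Finset.sum_add_distrib, Finset.sum_comm]
      rw [Finset.sum_comm (f := fun g b => (S b).1 g)]
      simp [fun b => (S b).2]
    have h2 := h1 pu₁ S₁
    rw [Finset.sum_congr rfl (fun g _ => hzg g), h1] at h2
    omega
  have key : ∀ {n q : ℕ} (p : Fin n → Fin k) (S : Fin q → Expo k α) (t : Fin q → Fin α → Fin k)
      (ht : ∀ b, auxCnt (t b) = S b) (g : Fin k),
      (Finset.univ.filter fun x => (Sum.elim p (fun y : Fin q × Fin α => t y.1 y.2) :
        Fin n ⊕ Fin q × Fin α → Fin k) x = g).card =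
      (∑ j, if p j = g then 1 else 0) + ∑ b, (S b).1 g := by
    intro n q p S t ht g
    rw [Finset.card_filter, Fintype.sum_sum_type, Fintype.sum_prod_type]
    simp only [← ht, auxCnt, Finset.card_filter, Sum.elim_inl, Sum.elim_inr]
    congr!
  have := aux_NF_perm m c₁ (Sum.elim pu₁ fun y => t₁ y.1 y.2) (Sum.elim pu₂ fun y => t₂ y.1 y.2)
    (Sum.elim pv₁ fun y => t₁' y.1 y.2) (Sum.elim pv₂ fun y => t₂' y.1 y.2)
    (aux_exists_perm _ _ fun g => by rw [key _ _ _ ht₁, key _ _ _ ht₂, hzg])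
    (aux_exists_perm _ _ fun g => by rw [key _ _ _ ht₁', key _ _ _ ht₂', hwg])
  simpa only [Sum.elim_inl, Sum.elim_inr, ht₁, ht₂, ht₁', ht₂'] using this

theorem aux_ker_eq (m : Fin ℓ → ℕ) (hℓ : 1 ≤ ℓ) (hm : ∀ i, 1 ≤ m i) :
    RingHom.ker (piMap ℓ k α m).toRingHom = Ideal.span (rels ℓ k α m) := by
  have hle : Ideal.span (rels ℓ k α m) ≤ RingHom.ker (piMap ℓ k α m).toRingHom :=
    Ideal.span_le.2 (aux_rels m)
  refine le_antisymm ?_ hle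
  have hcomp : ∀ x y : FreeP ℓ k α, auxMk ℓ k α m x = auxMk ℓ k α m y →
      piMap ℓ k α m x = piMap ℓ k α m y := fun x y hxy => by
    have h1 : piMap ℓ k α m (x - y) = 0 := hle (Ideal.Quotient.eq.1 hxy)
    rwa [map_sub, sub_eq_zero] at h1
  have hmon : ∀ d d', auxPhi m d = auxPhi m d' →
      auxMk ℓ k α m (monomial d 1) = auxMk ℓ k α m (monomial d' 1) := by
    intro d d' h
    obtain ⟨c₁, n₁, q₁, q₁', pu₁, pv₁, S₁, S₁', h₁, e₁⟩ := aux_exists_NF m d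
    obtain ⟨c₂, n₂, q₂, q₂', pu₂, pv₂, S₂, S₂', h₂, e₂⟩ := aux_exists_NF m d'
    rw [e₁, e₂]
    apply aux_NF_unique m hℓ hm _ _ _ _ _ _ _ _ _ _ h₁ h₂
    rw [← hcomp _ _ e₁, ← hcomp _ _ e₂, aux_pi_monomial, aux_pi_monomial, h]
  let L : PP ℓ k →ₗ[ℂ] (FreeP ℓ k α ⧸ Ideal.span (rels ℓ k α m)) :=
    (basisMonomials _ ℂ).constr ℂ fun e => auxMk ℓ k α m (monomial (Function.invFun (auxPhi m) e) 1)
  have hL : L ∘ₗ (piMap ℓ k α m).toLinearMap =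
      (Ideal.Quotient.mkₐ ℂ (Ideal.span (rels ℓ k α m))).toLinearMap := by
    apply (basisMonomials _ ℂ).ext
    intro d
    simp only [coe_basisMonomials, LinearMap.comp_apply, AlgHom.toLinearMap_apply,
      aux_pi_monomial]
    have h1 : (monomial (auxPhi m d) 1 : PP ℓ k) = basisMonomials _ ℂ (auxPhi m d) := by simp
    rw [h1, Module.Basis.constr_basis]
    exact hmon _ _ (Function.invFun_eq ⟨d, rfl⟩)
  intro f hf
  have hf' : piMap ℓ k α m f = 0 := hf
  have h2 := LinearMap.congr_fun hL f
  rw [LinearMap.comp_apply, AlgHom.toLinearMap_apply, hf', map_zero] at h2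
  exact Ideal.Quotient.eq_zero_iff_mem.1 h2.symm

end

/-- for a faithful Type I_k weight matrix, the kernel of `π` is
exactly the ideal generated by the six families of off-shell relations. -/
theorem stmt11 (ℓ k : ℕ) (hℓ : 1 ≤ ℓ) (hk : 1 ≤ k)
    (a n : Fin ℓ → ℕ)
    (ha : ∀ i, 0 < a i) (hn : ∀ i, 0 < n i)
    (hF1 : ∀ i j, i ≠ j → Nat.gcd (a i) (a j) = 1)
    (hF2 : ∀ i, Nat.gcd (a i) (n i) = 1) :
    let α : ℕ := Finset.univ.lcm a
    let m : Fin ℓ → ℕ := fun i => n i * α / a i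
    RingHom.ker (piMap ℓ k α m).toRingHom = Ideal.span (rels ℓ k α m) := by
  intro α m
  have hα : 0 < α := Nat.pos_of_ne_zero fun h => by
    obtain ⟨i, -, hi⟩ := Finset.lcm_eq_zero_iff.1 h
    exact (ha i).ne' hi
  refine aux_ker_eq m hℓ fun i => ?_
  have hd : a i ∣ α := Finset.dvd_lcm (Finset.mem_univ i)
  exact Nat.div_pos (Nat.le_of_dvd (Nat.mul_pos (hn i) hα) (hd.mul_left _)) (ha i)
end

section
/- Assume Type I_k (c_1 = ⋯ = c_k = 1) and the faithfulness condition (F). Suppose given real numbers ρ_i ≥ 0 (i = 1,…,ℓ), complex numbers π_{g,h} (1 ≤ g,h ≤ k) with π_{h,g} = conj(π_{g,h}) and π_{g,g} real and ≥ 0, and complex numbers κ_s (one for each s ∈ ℕ^k with |s| = α), satisfying: (i) a_i ρ_i = n_i Σ_{g=1}^k π_{g,g} for every i; (ii) π_{g,h}π_{i,j} = π_{g,j}π_{i,h} for all g,h,i,j; (iii) π_{g,h}κ_s = π_{i,h}κ_{s+e_g−e_i} whenever s_i ≥ 1; (iv) κ_sκ_{s′} = κ_tκ_{t′} whenever s +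 s′ = t + t′; (v) (∏_{i=1}^ℓ ρ_i^{m_i})(∏_{j=1}^α π_{g_j,h_j}) = κ_s·conj(κ_{s′}) whenever the list (g_1,…,g_α) contains each g exactly s_g times and (h_1,…,h_α) contains each h exactly s′_h times. Then there exists a point z = (z_1,…,z_n) ∈ Z_A (n = ℓ+k) such that z_i·conj(z_i) = ρ_i for i ≤ ℓ, z_{ℓ+g}·conj(z_{ℓ+h}) = π_{g,h} for all g,h, and (∏_{i=1}^ℓ z_i^{m_i})(∏_{g=1}^k z_{ℓ+g}^{s_g}) = κ_s for every s. -/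
open Complex ComplexConjugate

theorem aux_list {k α : ℕ} (s : Fin k → ℕ) (hs : ∑ g, s g = α) :
    ∃ g : Fin α → Fin k, ∀ x, (Finset.univ.filter fun j => g j = x).card = s x := by
  subst hs
  refine ⟨fun j => (finSigmaFinEquiv.symm j).1, fun x => ?_⟩
  have h1 : (Finset.univ.filter fun j : Fin (∑ g, s g) => (finSigmaFinEquiv.symm j).1 = x).card
      = (Finset.univ.filter fun j : (Σ g, Fin (s g)) => j.1 = x).card := by
    refine Finset.card_equiv finSigmaFinEquiv.symm ?_
    intro i
    simp
  rw [h1]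
  have h2 : (Finset.univ.filter fun j : (Σ g, Fin (s g)) => j.1 = x)
      = (Finset.univ : Finset (Fin (s x))).map ⟨Sigma.mk x, sigma_mk_injective⟩ := by
    ext ⟨y, b⟩
    simp only [Finset.mem_filter, Finset.mem_univ, true_and, Finset.mem_map,
      Function.Embedding.coeFn_mk]
    constructor
    · rintro rfl
      exact ⟨b, rfl⟩
    · rintro ⟨c, hc⟩
      exact (congrArg Sigma.fst hc).symm
  rw [h2, Finset.card_map, Finset.card_univ, Fintype.card_fin]

theorem aux_prod {k α : ℕ} (s : Fin k → ℕ) (g : Fin α → Fin k)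
    (hg : ∀ x, (Finset.univ.filter fun j => g j = x).card = s x) (f : Fin k → ℂ) :
    ∏ j, f (g j) = ∏ x, f x ^ s x := by
  rw [← Finset.prod_fiberwise (s := Finset.univ) (g := g)]
  refine Finset.prod_congr rfl fun x _ => ?_
  rw [← hg x, ← Finset.prod_const]
  refine Finset.prod_congr rfl fun j hj => ?_
  rw [(Finset.mem_filter.mp hj).2]

/-- surjectivity of the Hilbert map of a faithful Type I_k torus
representation onto the semialgebraic set cut out by the on-shell relations and the
inequalities `ρ_i ≥ 0`, `π_{g,g} ≥ 0`: any values `ρ_i`, `π_{g,h}`, `κ_s` satisfying the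
relations (i)–(v) and these conditions come from a point of the shell `Z_A`. -/
theorem stmt12 (ℓ k : ℕ) (hℓ : 1 ≤ ℓ) (hk : 1 ≤ k)
    (a n : Fin ℓ → ℕ)
    (ha : ∀ i, 0 < a i) (hn : ∀ i, 0 < n i)
    (hF1 : ∀ i j, i ≠ j → Nat.gcd (a i) (a j) = 1)
    (hF2 : ∀ i, Nat.gcd (a i) (n i) = 1) :
    let α : ℕ := Finset.univ.lcm a
    let m : Fin ℓ → ℕ := fun i => n i * α / a i
    ∀ (ρ : Fin ℓ → ℝ) (πm : Fin k → Fin k → ℂ)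
      (κ : {s : Fin k → ℕ // ∑ g, s g = α} → ℂ),
      (∀ i, 0 ≤ ρ i) →
      (∀ g h, πm h g = conj (πm g h)) →
      (∀ g, (πm g g).im = 0 ∧ 0 ≤ (πm g g).re) →
      -- (i)
      (∀ i, (a i : ℂ) * (ρ i : ℂ) = (n i : ℂ) * ∑ g, πm g g) →
      -- (ii)
      (∀ g h i j, πm g h * πm i j = πm g j * πm i h) →
      -- (iii)
      (∀ (g h i : Fin k) (s s' : {s : Fin k → ℕ // ∑ g, s g = α}),
        1 ≤ s.1 i →
        (∀ j, s'.1 j + (if j = i then 1 else 0) = s.1 j + (if j = g then 1 else 0)) →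
        πm g h * κ s = πm i h * κ s') →
      -- (iv)
      (∀ s s' t t' : {s : Fin k → ℕ // ∑ g, s g = α},
        (∀ j, s.1 j + s'.1 j = t.1 j + t'.1 j) →
        κ s * κ s' = κ t * κ t') →
      -- (v)
      (∀ (s s' : {s : Fin k → ℕ // ∑ g, s g = α}) (g h : Fin α → Fin k),
        (∀ x, (Finset.univ.filter fun j => g j = x).card = s.1 x) →
        (∀ x, (Finset.univ.filter fun j => h j = x).card = s'.1 x) →
        (∏ i, (ρ i : ℂ) ^ m i) * ∏ j, πm (g j) (h j) = κ s * conj (κ s')) →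
      -- conclusion: a point of the shell realizing the given values
      ∃ (z₁ : Fin ℓ → ℂ) (z₂ : Fin k → ℂ),
        (∀ i, -(a i : ℝ) * normSq (z₁ i) + (n i : ℝ) * ∑ g, normSq (z₂ g) = 0) ∧
        (∀ i, z₁ i * conj (z₁ i) = (ρ i : ℂ)) ∧
        (∀ g h, z₂ g * conj (z₂ h) = πm g h) ∧
        (∀ s : {s : Fin k → ℕ // ∑ g, s g = α},
          (∏ i, z₁ i ^ m i) * ∏ g, z₂ g ^ s.1 g = κ s) := by
  intro α m ρ πm κ hρ hherm hdiag h1 h2 _ _ h5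
  have hα : 0 < α := by
    refine Nat.pos_of_ne_zero fun h0 => ?_
    rw [Finset.lcm_eq_zero_iff] at h0
    obtain ⟨i, _, hi⟩ := h0
    exact (ha i).ne' hi
  have hreal : ∀ g, πm g g = ((πm g g).re : ℂ) := fun g => by
    apply Complex.ext <;> simp [(hdiag g).1]
  -- the shell equation follows from the others
  have shell : ∀ (z₁ : Fin ℓ → ℂ) (z₂ : Fin k → ℂ),
      (∀ i, z₁ i * conj (z₁ i) = (ρ i : ℂ)) →
      (∀ g h, z₂ g * conj (z₂ h) = πm g h) →
      ∀ i, -(a i : ℝ) * normSq (z₁ i) + (n i : ℝ) * ∑ g, normSq (z₂ g) = 0 := by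
    intro z₁ z₂ e1 e2 i
    have : ((-(a i : ℝ) * normSq (z₁ i) + (n i : ℝ) * ∑ g, normSq (z₂ g) : ℝ) : ℂ) = 0 := by
      push_cast
      simp only [← Complex.mul_conj]
      rw [e1]
      simp only [e2]
      rw [← h1 i]
      ring
    exact_mod_cast this
  by_cases hz : ∀ g, πm g g = 0
  · have hπ : ∀ g h, πm g h = 0 := by
      intro g h
      have := h2 g h h g
      rw [hz g, zero_mul, hherm g h, Complex.mul_conj] at this
      exact Complex.normSq_eq_zero.mp (by exact_mod_cast this)
    have hρ0 : ∀ i, (ρ i : ℂ) = 0 := by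
      intro i
      have := h1 i
      simp only [hz, Finset.sum_const_zero, mul_zero] at this
      exact (mul_eq_zero.mp this).resolve_left (by exact_mod_cast (ha i).ne')
    have e1 : ∀ i : Fin ℓ, (0 : ℂ) * conj (0 : ℂ) = (ρ i : ℂ) := fun i => by simp [hρ0]
    have e2 : ∀ g h : Fin k, (0 : ℂ) * conj (0 : ℂ) = πm g h := fun g h => by simp [hπ]
    refine ⟨fun _ => 0, fun _ => 0, shell _ _ e1 e2, e1, e2, fun s => ?_⟩
    obtain ⟨g, hg⟩ := aux_list s.1 s.2
    have := h5 s s g g hg hg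
    have hp : ∏ j, πm (g j) (g j) = 0 := Finset.prod_eq_zero (Finset.mem_univ (⟨0, hα⟩ : Fin α)) (hπ _ _)
    rw [hp, mul_zero, Complex.mul_conj] at this
    have hk0 : κ s = 0 := Complex.normSq_eq_zero.mp (by exact_mod_cast this.symm)
    rw [hk0, ← aux_prod s.1 g hg (fun _ => 0),
      Finset.prod_eq_zero (Finset.mem_univ (⟨0, hα⟩ : Fin α)) rfl, mul_zero]
  · push Not at hz
    obtain ⟨g0, hg0⟩ := hz
    have hp : 0 < (πm g0 g0).re := lt_of_le_of_ne (hdiag g0).2 fun h => hg0 (by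
      rw [hreal g0, ← h]; simp)
    set p := (πm g0 g0).re with hpdef
    set r := Real.sqrt p with hrdef
    have hr : 0 < r := Real.sqrt_pos.mpr hp
    have hrr : (r : ℂ) * r = p := by exact_mod_cast Real.mul_self_sqrt hp.le
    have hrC : (r : ℂ) ≠ 0 := by exact_mod_cast hr.ne'
    have hρpos : ∀ i, 0 < ρ i := by
      intro i
      have h := congrArg Complex.re (h1 i)
      have hS : 0 < ∑ g, (πm g g).re :=
        Finset.sum_pos' (fun g _ => (hdiag g).2) ⟨g0, Finset.mem_univ _, hp⟩
      have h' : (a i : ℝ) * ρ i = n i * ∑ g, (πm g g).re := by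
        have e : ∑ g, πm g g = ((∑ g, (πm g g).re : ℝ) : ℂ) := by
          push_cast
          exact Finset.sum_congr rfl fun g _ => hreal g
        have := h1 i
        rw [e] at this
        exact_mod_cast this
      have hai : (0 : ℝ) < a i := by exact_mod_cast ha i
      have hni : (0 : ℝ) < n i := by exact_mod_cast hn i
      have : 0 < (a i : ℝ) * ρ i := by rw [h']; positivity
      exact (pos_iff_pos_of_mul_pos this).mp hai
    let z₁ : Fin ℓ → ℂ := fun i => (Real.sqrt (ρ i) : ℂ)
    have hzz : ∀ i, z₁ i * z₁ i = ρ i := fun i => by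
      simp only [z₁]
      exact_mod_cast Real.mul_self_sqrt (hρ i)
    have hzc : ∀ i, conj (z₁ i) = z₁ i := fun i => Complex.conj_ofReal _
    have hz1 : ∀ i, z₁ i ≠ 0 := fun i h => by
      have := hzz i
      rw [h, zero_mul] at this
      exact (hρpos i).ne' (by exact_mod_cast this.symm)
    set P : ℂ := ∏ i, z₁ i ^ m i with hP
    have hP0 : P ≠ 0 := Finset.prod_ne_zero_iff.mpr fun i _ => pow_ne_zero _ (hz1 i)
    have hPc : conj P = P := by
      rw [hP, map_prod]
      exact Finset.prod_congr rfl fun i _ => by rw [map_pow, hzc]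
    have hPP : ∏ i, (ρ i : ℂ) ^ m i = P * P := by
      rw [hP, ← Finset.prod_mul_distrib]
      exact Finset.prod_congr rfl fun i _ => by rw [← hzz, mul_pow]
    let s0 : {s : Fin k → ℕ // ∑ g, s g = α} := ⟨fun g => if g = g0 then α else 0, by simp⟩
    have hs0 : ∀ x, (Finset.univ.filter fun _ : Fin α => g0 = x).card = s0.1 x := by
      intro x
      by_cases hx : x = g0
      · subst hx; simp [s0]
      · simp [s0, hx, Ne.symm hx]
    have hκ0 : κ s0 * conj (κ s0) = P * P * (p : ℂ) ^ α := by
      rw [← h5 s0 s0 (fun _ => g0) (fun _ => g0) hs0 hs0, hPP, hreal g0]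
      simp [hpdef]
    have hκne : κ s0 ≠ 0 := fun h => by
      rw [h, zero_mul] at hκ0
      have : (p : ℂ) ≠ 0 := by exact_mod_cast hp.ne'
      exact mul_ne_zero (mul_ne_zero hP0 hP0) (pow_ne_zero α this) hκ0.symm
    obtain ⟨v, hv⟩ := IsAlgClosed.exists_pow_nat_eq (κ s0 / (P * (r : ℂ) ^ α)) hα
    have hvα : P * (v * r) ^ α = κ s0 := by
      rw [mul_pow, hv]
      field_simp
    have hvv : v * conj v = 1 := by
      have e : (v * conj v) ^ α = 1 := by
        rw [mul_pow, ← map_pow, hv, map_div₀, div_mul_div_comm, hκ0, map_mul, hPc, map_pow,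
          Complex.conj_ofReal, ← hrr, mul_pow]
        field_simp
      rw [Complex.mul_conj] at e ⊢
      have e' : normSq v ^ α = 1 := by exact_mod_cast e
      rw [(pow_eq_one_iff_of_nonneg (normSq_nonneg v) hα.ne').mp e']
      simp
    let z₂ : Fin k → ℂ := fun g => v * (πm g g0 / r)
    have hz20 : z₂ g0 = v * r := by
      simp only [z₂]
      rw [hreal g0, ← hpdef, ← hrr]
      field_simp
    have e1 : ∀ i, z₁ i * conj (z₁ i) = (ρ i : ℂ) := fun i => by rw [hzc, hzz]
    have e2 : ∀ g h, z₂ g * conj (z₂ h) = πm g h := by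
      intro g h
      simp only [z₂, map_mul, map_div₀, Complex.conj_ofReal]
      rw [← hherm h g0]
      have q := h2 g g0 g0 h
      rw [hreal g0, ← hpdef, ← hrr] at q
      calc v * (πm g g0 / r) * (conj v * (πm g0 h / r))
          = (v * conj v) * (πm g g0 * πm g0 h) / (r * r) := by ring
        _ = πm g h := by rw [hvv, q]; field_simp
    refine ⟨z₁, z₂, shell _ _ e1 e2, e1, e2, fun s => ?_⟩
    obtain ⟨g, hg⟩ := aux_list s.1 s.2
    have q := h5 s s0 g (fun _ => g0) hg hs0
    have hc : conj (κ s0) ≠ 0 := (map_ne_zero _).mpr hκne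
    apply mul_right_cancel₀ hc
    rw [← q, hPP, ← hP, ← aux_prod s.1 g hg z₂]
    have hprod : ∏ j, πm (g j) g0 = (∏ j, z₂ (g j)) * conj (z₂ g0) ^ α := by
      rw [Finset.prod_congr rfl fun j _ => (e2 (g j) g0).symm, Finset.prod_mul_distrib,
        Finset.prod_const, Finset.card_univ, Fintype.card_fin]
    rw [hprod, ← hvα, map_mul, hPc, map_pow, ← hz20]
    ring
end

section
/- Let Q_A = ℝ[p_1,…,p_6]/(R_1, R_2, R_3, R_4) and Q_B = ℝ[q_1,…,q_6]/(R′_1, R′_2, R′_3, R′_4), where R_1 = p_1²p_2 − p_3p_4; R_2 = 27(4p_2³(3p_1 + 2p_2) + (p_1 + 6p_2)p_3p_4) − 8p_5p_6; R_3 = −81p_1²p_3p_4 − 8(−54p_2⁵ + 54p_1p_2p_3p_4 + 81p_2²p_3p_4 − 3p_1p_5p_6 + 2p_2p_5p_6); R_4 = 27p_3p_4(p_1³ + 12p_1p_2² + 8p_2³ + 6p_3p_4) − 8p_1²p_5p_6; and R′_1 = 4q_2(q_1 + 3q_2)² − 9q_3q_4; R′_2 = 108q_2³(q_1 + 2q_2)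 + 9(q_1 − 6q_2)q_3q_4 − 4q_5q_6; R′_3 = 108q_2⁵ − 9(q_1² − 2q_1q_2 + 3q_2²)q_3q_4 + 4(q_1 + 4q_2)q_5q_6; R′_4 = 9q_1³q_3q_4 − 4(q_1 + 3q_2)²q_5q_6. Then for every degree-preserving isomorphism of graded ℝ-algebras Φ : Q_A → Q_B there exists a real number c ≠ 0 such that Φ(p_1) = −(2c/3)·q_1 − 2c·q_2 and Φ(p_2) = c·q_2 (as classes in Q_B). In particular, either Φ(p_1) or Φ(p_2) is a nonzero linear combination of q_1, q_2 with some negative coefficient, so no graded isomorphism Q_A → Q_B can map both p_1 and p_2 to nonnegative combinations of q_1 and q_2. -/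
open MvPolynomial

/-- The polynomial ring `ℝ[p_1,…,p_6]` (resp. `ℝ[q_1,…,q_6]`), with `p_i` (resp. `q_i`)
the variable `X (i-1)`. -/
abbrev P6 := MvPolynomial (Fin 6) ℝ

/-- The weights `deg p_1 = deg p_2 = 2`, `deg p_3 = deg p_4 = 3`,
`deg p_5 = deg p_6 = 4` (same for the `q_i`). -/
def w6 : Fin 6 → ℕ := ![2, 2, 3, 3, 4, 4]

set_option maxHeartbeats 2000000 in
/-- The ideal `(R_1, R_2, R_3, R_4)` of relations on the `A = (-2,3,6)` side. -/
noncomputable def idA : Ideal P6 := Ideal.span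
  { X 0 ^ 2 * X 1 - X 2 * X 3,
    27 * (4 * X 1 ^ 3 * (3 * X 0 + 2 * X 1) + (X 0 + 6 * X 1) * X 2 * X 3)
      - 8 * X 4 * X 5,
    -81 * X 0 ^ 2 * X 2 * X 3
      - 8 * (-54 * X 1 ^ 5 + 54 * X 0 * X 1 * X 2 * X 3 + 81 * X 1 ^ 2 * X 2 * X 3
          - 3 * X 0 * X 4 * X 5 + 2 * X 1 * X 4 * X 5),
    27 * X 2 * X 3 * (X 0 ^ 3 + 12 * X 0 * X 1 ^ 2 + 8 * X 1 ^ 3 + 6 * X 2 * X 3)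
      - 8 * X 0 ^ 2 * X 4 * X 5 }

set_option maxHeartbeats 2000000 in
/-- The ideal `(R'_1, R'_2, R'_3, R'_4)` of relations on the `B = (-3,2,6)` side. -/
noncomputable def idB : Ideal P6 := Ideal.span
  { 4 * X 1 * (X 0 + 3 * X 1) ^ 2 - 9 * X 2 * X 3,
    108 * X 1 ^ 3 * (X 0 + 2 * X 1) + 9 * (X 0 - 6 * X 1) * X 2 * X 3 - 4 * X 4 * X 5,
    108 * X 1 ^ 5 - 9 * (X 0 ^ 2 - 2 * X 0 * X 1 + 3 * X 1 ^ 2) * X 2 * X 3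
      + 4 * (X 0 + 4 * X 1) * X 4 * X 5,
    9 * X 0 ^ 3 * X 2 * X 3 - 4 * (X 0 + 3 * X 1) ^ 2 * X 4 * X 5 }


theorem evA (x : Fin 6 → ℝ) (h1 : x 0 ^ 2 * x 1 = x 2 * x 3)
    (h2 : 8 * (x 4 * x 5) = 27 * x 1 * (x 0 + 2 * x 1) ^ 3) (f g : P6)
    (h : Ideal.Quotient.mk idA f = Ideal.Quotient.mk idA g) : eval x f = eval x g := by
  rw [Ideal.Quotient.eq] at h
  have hle : idA ≤ RingHom.ker (eval x) := by
    unfold idA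
    rw [Ideal.span_le]
    intro r hr
    simp only [Set.mem_insert_iff, Set.mem_singleton_iff] at hr
    rw [SetLike.mem_coe, RingHom.mem_ker]
    rcases hr with rfl | rfl | rfl | rfl <;> simp
    · linear_combination h1
    · linear_combination -h2 - 27 * (x 0 + 6 * x 1) * h1
    · linear_combination (3 * x 0 - 2 * x 1) * h2
        + (81 * x 0 ^ 2 + 432 * x 0 * x 1 + 648 * x 1 ^ 2) * h1
    · linear_combination - x 0 ^ 2 * h2 - (27 * (x 0 ^ 3 + 12 * x 0 * x 1 ^ 2 + 8 * x 1 ^ 3)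
        + 162 * (x 2 * x 3 + x 0 ^ 2 * x 1)) * h1
  have := hle h
  rw [RingHom.mem_ker, map_sub, sub_eq_zero] at this
  exact this

theorem evB (x : Fin 6 → ℝ) (h1 : 4 * x 1 * (x 0 + 3 * x 1) ^ 2 = 9 * (x 2 * x 3))
    (h2 : x 4 * x 5 = x 1 * x 0 ^ 3) (f g : P6)
    (h : Ideal.Quotient.mk idB f = Ideal.Quotient.mk idB g) : eval x f = eval x g := by
  rw [Ideal.Quotient.eq] at h
  have hle : idB ≤ RingHom.ker (eval x) := by
    unfold idB
    rw [Ideal.span_le]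
    intro r hr
    simp only [Set.mem_insert_iff, Set.mem_singleton_iff] at hr
    rw [SetLike.mem_coe, RingHom.mem_ker]
    rcases hr with rfl | rfl | rfl | rfl <;> simp
    · linear_combination h1
    · linear_combination -4 * h2 - (x 0 - 6 * x 1) * h1
    · linear_combination 4 * (x 0 + 4 * x 1) * h2
        + (x 0 ^ 2 - 2 * x 0 * x 1 + 3 * x 1 ^ 2) * h1
    · linear_combination - 4 * (x 0 + 3 * x 1) ^ 2 * h2 - x 0 ^ 3 * h1
  have := hle h
  rw [RingHom.mem_ker, map_sub, sub_eq_zero] at this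
  exact this

theorem hom_ind (n : ℕ) (S : P6 → Prop) (h0 : S 0) (hadd : ∀ f g, S f → S g → S (f + g))
    (hm : ∀ (m : Fin 6 → ℕ) (c : ℝ),
      2 * m 0 + 2 * m 1 + 3 * m 2 + 3 * m 3 + 4 * m 4 + 4 * m 5 = n →
      S (C c * (X 0 ^ m 0 * X 1 ^ m 1 * X 2 ^ m 2 * X 3 ^ m 3 * X 4 ^ m 4 * X 5 ^ m 5)))
    (f : P6) (hf : f.IsWeightedHomogeneous w6 n) : S f := by
  rw [f.as_sum]
  refine Finset.sum_induction _ S hadd h0 ?_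
  intro m hmem
  have hw := hf (mem_support_iff.1 hmem)
  have := hm m (coeff m f) (by
    rw [← hw, Finsupp.weight_apply, Finsupp.sum_fintype _ _ (by simp), Fin.sum_univ_six]
    simp [w6]
    ring)
  rw [monomial_eq, Finsupp.prod_fintype _ _ (by simp), Fin.prod_univ_six]
  exact this

theorem hom2 (f : P6) (hf : f.IsWeightedHomogeneous w6 2) :
    ∃ a b : ℝ, f = C a * X 0 + C b * X 1 := by
  refine hom_ind 2 (fun f => ∃ a b : ℝ, f = C a * X 0 + C b * X 1) ⟨0, 0, by simp⟩ ?_ ?_ f hf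
  · rintro _ _ ⟨a, b, rfl⟩ ⟨a', b', rfl⟩
    exact ⟨a + a', b + b', by simp only [C_add]; ring⟩
  · intro m c h
    have h2 : m 2 = 0 := by omega
    have h3 : m 3 = 0 := by omega
    have h4 : m 4 = 0 := by omega
    have h5 : m 5 = 0 := by omega
    have h01 : (m 0 = 1 ∧ m 1 = 0) ∨ (m 0 = 0 ∧ m 1 = 1) := by omega
    rcases h01 with ⟨h0, h1⟩ | ⟨h0, h1⟩
    · exact ⟨c, 0, by simp [h0, h1, h2, h3, h4, h5]⟩
    · exact ⟨0, c, by simp [h0, h1, h2, h3, h4, h5]⟩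

theorem hom3 (f : P6) (hf : f.IsWeightedHomogeneous w6 3) :
    ∃ a b : ℝ, f = C a * X 2 + C b * X 3 := by
  refine hom_ind 3 (fun f => ∃ a b : ℝ, f = C a * X 2 + C b * X 3) ⟨0, 0, by simp⟩ ?_ ?_ f hf
  · rintro _ _ ⟨a, b, rfl⟩ ⟨a', b', rfl⟩
    exact ⟨a + a', b + b', by simp only [C_add]; ring⟩
  · intro m c h
    have h2 : m 0 = 0 := by omega
    have h3 : m 1 = 0 := by omega
    have h4 : m 4 = 0 := by omega
    have h5 : m 5 = 0 := by omega
    have h01 : (m 2 = 1 ∧ m 3 = 0) ∨ (m 2 = 0 ∧ m 3 = 1) := by omega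
    rcases h01 with ⟨h0, h1⟩ | ⟨h0, h1⟩
    · exact ⟨c, 0, by simp [h0, h1, h2, h3, h4, h5]⟩
    · exact ⟨0, c, by simp [h0, h1, h2, h3, h4, h5]⟩

theorem hom4 (f : P6) (hf : f.IsWeightedHomogeneous w6 4) :
    ∃ a b u v w : ℝ, f = C a * X 4 + C b * X 5
      + (C u * X 0 ^ 2 + C v * (X 0 * X 1) + C w * X 1 ^ 2) := by
  refine hom_ind 4 (fun f => ∃ a b u v w : ℝ, f = C a * X 4 + C b * X 5
      + (C u * X 0 ^ 2 + C v * (X 0 * X 1) + C w * X 1 ^ 2))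
      ⟨0, 0, 0, 0, 0, by simp⟩ ?_ ?_ f hf
  · rintro _ _ ⟨a, b, u, v, w, rfl⟩ ⟨a', b', u', v', w', rfl⟩
    exact ⟨a + a', b + b', u + u', v + v', w + w', by simp only [C_add]; ring⟩
  · intro m c h
    have h2 : m 2 = 0 := by omega
    have h3 : m 3 = 0 := by omega
    have h01 : (m 0 = 0 ∧ m 1 = 0 ∧ m 4 = 1 ∧ m 5 = 0) ∨ (m 0 = 0 ∧ m 1 = 0 ∧ m 4 = 0 ∧ m 5 = 1)
      ∨ (m 0 = 2 ∧ m 1 = 0 ∧ m 4 = 0 ∧ m 5 = 0) ∨ (m 0 = 1 ∧ m 1 = 1 ∧ m 4 = 0 ∧ m 5 = 0)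
      ∨ (m 0 = 0 ∧ m 1 = 2 ∧ m 4 = 0 ∧ m 5 = 0) := by omega
    rcases h01 with ⟨h0, h1, h4, h5⟩ | ⟨h0, h1, h4, h5⟩ | ⟨h0, h1, h4, h5⟩ | ⟨h0, h1, h4, h5⟩ |
      ⟨h0, h1, h4, h5⟩
    · exact ⟨c, 0, 0, 0, 0, by simp [h0, h1, h2, h3, h4, h5]⟩
    · exact ⟨0, c, 0, 0, 0, by simp [h0, h1, h2, h3, h4, h5]⟩
    · exact ⟨0, 0, c, 0, 0, by simp [h0, h1, h2, h3, h4, h5]⟩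
    · exact ⟨0, 0, 0, c, 0, by simp [h0, h1, h2, h3, h4, h5]⟩
    · exact ⟨0, 0, 0, 0, c, by simp [h0, h1, h2, h3, h4, h5]⟩

theorem relA1 : Ideal.Quotient.mk idA (X 0 ^ 2 * X 1) = Ideal.Quotient.mk idA (X 2 * X 3) := by
  rw [Ideal.Quotient.eq]
  exact Ideal.subset_span (by simp)

theorem relA2 : Ideal.Quotient.mk idA
    (27 * (4 * X 1 ^ 3 * (3 * X 0 + 2 * X 1) + (X 0 + 6 * X 1) * X 2 * X 3))
    = Ideal.Quotient.mk idA (8 * X 4 * X 5) := by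
  rw [Ideal.Quotient.eq]
  exact Ideal.subset_span (by simp)

theorem linA (u v : ℝ) (h : Ideal.Quotient.mk idA (C u * X 0 + C v * X 1) = 0) :
    u = 0 ∧ v = 0 := by
  rw [← map_zero (Ideal.Quotient.mk idA)] at h
  have h1 := evA ![1, 0, 0, 0, 0, 0] (by simp) (by simp) _ _ h
  have h2 := evA ![0, 1, 0, 0, 27, 1] (by simp) (by simp; norm_num) _ _ h
  simp at h1 h2
  exact ⟨h1, h2⟩

theorem linB (a b u v : ℝ) (h : Ideal.Quotient.mk idB (C a * X 0 + C b * X 1)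
    = Ideal.Quotient.mk idB (C u * X 0 + C v * X 1)) :
    a = u ∧ b = v := by
  have h1 := evB ![1, 0, 0, 0, 0, 0] (by simp) (by simp) _ _ h
  have h2 := evB ![0, 1, 4, 1, 0, 0] (by simp; norm_num) (by simp) _ _ h
  simp at h1 h2
  exact ⟨h1, h2⟩

theorem main_part (Φ : (P6 ⧸ idA) ≃ₐ[ℝ] (P6 ⧸ idB))
    (hΦ : ∀ d : ℕ,
        Φ '' (Ideal.Quotient.mk idA '' {f : P6 | f.IsWeightedHomogeneous w6 d})
          = Ideal.Quotient.mk idB '' {f : P6 | f.IsWeightedHomogeneous w6 d}) :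
    ∃ c : ℝ, c ≠ 0 ∧
          Φ (Ideal.Quotient.mk idA (X 0))
            = Ideal.Quotient.mk idB (C (-(2 * c / 3)) * X 0 + C (-(2 * c)) * X 1) ∧
          Φ (Ideal.Quotient.mk idA (X 1))
            = Ideal.Quotient.mk idB (C c * X 1) := by
  have key : ∀ i : Fin 6, ∃ f : P6, f.IsWeightedHomogeneous w6 (w6 i) ∧
      Ideal.Quotient.mk idB f = Φ (Ideal.Quotient.mk idA (X i)) := by
    intro i
    have : Φ (Ideal.Quotient.mk idA (X i)) ∈
        Φ '' (Ideal.Quotient.mk idA '' {f : P6 | f.IsWeightedHomogeneous w6 (w6 i)}) :=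
      ⟨_, ⟨X i, isWeightedHomogeneous_X ℝ w6 i, rfl⟩, rfl⟩
    rw [hΦ] at this
    exact this
  obtain ⟨f0, hf0, e0⟩ := key 0
  obtain ⟨f1, hf1, e1⟩ := key 1
  obtain ⟨f2, hf2, e2⟩ := key 2
  obtain ⟨f3, hf3, e3⟩ := key 3
  obtain ⟨f4, hf4, e4⟩ := key 4
  obtain ⟨f5, hf5, e5⟩ := key 5
  obtain ⟨a, b, rfl⟩ := hom2 f0 hf0
  obtain ⟨c, d, rfl⟩ := hom2 f1 hf1
  obtain ⟨e, f, rfl⟩ := hom3 f2 hf2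
  obtain ⟨g, h, rfl⟩ := hom3 f3 hf3
  obtain ⟨α, β, u, v, w, rfl⟩ := hom4 f4 hf4
  obtain ⟨γ, δ, u', v', w', rfl⟩ := hom4 f5 hf5
  have hC : ∀ r : ℝ, Φ (Ideal.Quotient.mk idA (C r)) = Ideal.Quotient.mk idB (C r) :=
    fun r => Φ.commutes r
  have hinj : ∀ p, Φ p = 0 → p = 0 := fun p hp => by simpa using hp
  -- nondegeneracy
  have hdet : a * d - b * c ≠ 0 := by
    intro hz
    have hz' : (C a * C d - C b * C c : P6) = 0 := by
      rw [← C_mul, ← C_mul, ← C_sub, hz, C_0]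
    have k1 := linA d (-b) (hinj _ (by
      simp only [map_add, map_mul, hC, ← e0, ← e1]
      simp only [← map_mul, ← map_add]
      rw [← map_zero (Ideal.Quotient.mk idB)]
      congr 1
      rw [C_neg]
      linear_combination X 0 * hz'))
    have k2 := linA (-c) a (hinj _ (by
      simp only [map_add, map_mul, hC, ← e0, ← e1]
      simp only [← map_mul, ← map_add]
      rw [← map_zero (Ideal.Quotient.mk idB)]
      congr 1
      rw [C_neg]
      linear_combination X 1 * hz'))
    have ha := k2.2
    have hb : b = 0 := by linarith [k1.2]
    have k3 := linA 1 0 (hinj _ (by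
      simp only [map_add, map_mul, hC, ← e0, ← e1]
      simp [ha, hb]))
    exact one_ne_zero k3.1
  -- first relation
  have r1 := congrArg Φ relA1
  simp only [map_mul, map_pow, ← e0, ← e1, ← e2, ← e3] at r1
  simp only [← map_mul, ← map_pow] at r1
  have p1 : ∀ x y t : ℝ, t ≠ 0 → (a * x + b * y) ^ 2 * (c * x + d * y) * t ^ 2
      = (e * t ^ 2 + f * (4 / 9 * y * (x + 3 * y) ^ 2)) *
        (g * t ^ 2 + h * (4 / 9 * y * (x + 3 * y) ^ 2)) := by
    intro x y t ht
    have := evB ![x, y, t, 4 / 9 * y * (x + 3 * y) ^ 2 / t, y * x ^ 3, 1]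
      (by simp; field_simp) (by simp) _ _ r1
    simp at this
    rw [this]
    field_simp
  have q : ∀ x y : ℝ, (a * x + b * y) ^ 2 * (c * x + d * y)
      = (e * h + f * g) * (4 / 9 * y * (x + 3 * y) ^ 2) := by
    intro x y
    have t1 := p1 x y 1 (by norm_num)
    have t2 := p1 x y 2 (by norm_num)
    have t3 := p1 x y 3 (by norm_num)
    linarith
  have q1 := q 1 0
  have q2 := q 0 1
  have q3 := q 1 1
  have q4 := q 1 (-1)
  obtain ⟨κ, hκ⟩ : ∃ κ, κ = 4 / 9 * (e * h + f * g) := ⟨_, rfl⟩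
  have s1 : a ^ 2 * c = 0 := by linarith
  have s4 : b ^ 2 * d = 9 * κ := by rw [hκ]; linarith
  have s2 : a ^ 2 * d + 2 * a * b * c = κ := by rw [hκ]; linarith
  have s3 : 2 * a * b * d + b ^ 2 * c = 6 * κ := by rw [hκ]; linarith
  have ha : a ≠ 0 := by
    rintro rfl
    have hk : κ = 0 := by linarith
    have : b ^ 2 * c = 0 := by rw [hk] at s3; linarith
    apply hdet
    rcases mul_eq_zero.1 this with h | h
    · rw [pow_eq_zero_iff (by norm_num)] at h; simp [h]
    · simp [h]
  have hc : c = 0 := by simpa [ha] using s1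
  subst hc
  have hd : d ≠ 0 := by rintro rfl; simp at hdet
  have hb : b = 3 * a := by
    have : 2 * a * d * (b - 3 * a) = 0 := by linear_combination s3 - 6 * s2
    have : b - 3 * a = 0 := by simpa [ha, hd] using this
    linarith
  -- second relation
  have r2 := congrArg Φ relA2
  have n27 : (27 : P6) = C 27 := (map_ofNat C _).symm
  have n8 : (8 : P6) = C 8 := (map_ofNat C _).symm
  have n6 : (6 : P6) = C 6 := (map_ofNat C _).symm
  have n4 : (4 : P6) = C 4 := (map_ofNat C _).symm
  have n3 : (3 : P6) = C 3 := (map_ofNat C _).symm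
  have n2 : (2 : P6) = C 2 := (map_ofNat C _).symm
  rw [n27, n8, n6, n4, n3, n2] at r2
  simp only [map_mul, map_pow, map_add, hC] at r2
  simp only [← e0, ← e1, ← e2, ← e3, ← e4, ← e5] at r2
  simp only [← map_mul, ← map_pow, ← map_add] at r2
  have N1 : ∀ s : ℝ, 27 * (d * (b + 2 * d) ^ 3) = 8 * ((α * s + w) * (γ * s + w')) := by
    intro s
    have i1 := evB ![0, 1, 4, 1, s, 0] (by simp; norm_num) (by simp) _ _ r2
    have i0 := evB ![0, 1, 4, 1, s, 0] (by simp; norm_num) (by simp) _ _ r1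
    simp at i1 i0
    linear_combination i1 + 27 * (b + 6 * d) * i0
  have N2 : ∀ s : ℝ, 27 * (d * (b + 2 * d) ^ 3) = 8 * ((β * s + w) * (δ * s + w')) := by
    intro s
    have i1 := evB ![0, 1, 4, 1, 0, s] (by simp; norm_num) (by simp) _ _ r2
    have i0 := evB ![0, 1, 4, 1, 0, s] (by simp; norm_num) (by simp) _ _ r1
    simp at i1 i0
    linear_combination i1 + 27 * (b + 6 * d) * i0
  have hbd : b + 2 * d = 0 := by
    by_contra hne
    have hN : 27 * (d * (b + 2 * d) ^ 3) ≠ 0 := by positivity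
    have a0 := N1 0
    have a1 := N1 1
    have a2 := N1 (-1)
    have b1 := N2 1
    have b2 := N2 (-1)
    have hw : w ≠ 0 := by rintro rfl; apply hN; rw [a0]; ring
    have hw' : w' ≠ 0 := by rintro rfl; apply hN; rw [a0]; ring
    have x1 : α * γ = 0 := by linarith
    have x2 : α * w' + γ * w = 0 := by linarith
    have y1 : β * δ = 0 := by linarith
    have y2 : β * w' + δ * w = 0 := by linarith
    have hα : α = 0 := by
      rcases mul_eq_zero.1 x1 with h | h
      · exact h
      · simpa [h, hw'] using x2
    have hβ : β = 0 := by
      rcases mul_eq_zero.1 y1 with h | h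
      · exact h
      · simpa [h, hw'] using y2
    subst hα hβ
    have hq1 : Ideal.Quotient.mk idB (X 1) = Φ (Ideal.Quotient.mk idA (C d⁻¹ * X 1)) := by
      rw [map_mul, map_mul, hC, ← e1, ← map_mul]
      congr 1
      have : (C d⁻¹ * C d : P6) = 1 := by rw [← C_mul, inv_mul_cancel₀ hd, C_1]
      rw [C_0]
      linear_combination - X 1 * this
    have hq0 : Ideal.Quotient.mk idB (X 0)
        = Φ (Ideal.Quotient.mk idA (C a⁻¹ * X 0 - C 3 * (C d⁻¹ * X 1))) := by
      rw [map_sub, map_sub, map_mul, map_mul, hC, ← e0, map_mul, map_mul Φ, ← hq1, hC,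
        ← map_mul, ← map_mul, ← map_sub]
      congr 1
      have : (C a⁻¹ * C a : P6) = 1 := by rw [← C_mul, inv_mul_cancel₀ ha, C_1]
      rw [hb, C_mul]
      linear_combination - (X 0 + C 3 * X 1) * this
    have e4' := e4
    rw [C_0, zero_mul, zero_mul, zero_add, zero_add] at e4'
    simp only [map_mul, map_pow, map_add, hq0, hq1, ← hC] at e4'
    simp only [← map_mul, ← map_pow, ← map_add] at e4'
    have e5' := Φ.injective e4'
    have := evA ![0, 0, 0, 0, 1, 0] (by simp) (by simp) _ _ e5'
    simp at this
  refine ⟨d, hd, ?_, ?_⟩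
  · rw [← e0]
    have h1 : a = -(2 * d / 3) := by linarith
    have h2 : b = -(2 * d) := by linarith
    rw [← h1, ← h2]
  · rw [← e1]; simp

/-- every degree-preserving isomorphism of graded ℝ-algebras
`Q_A = ℝ[p]/(R_1,…,R_4) → Q_B = ℝ[q]/(R'_1,…,R'_4)` sends `p_1 ↦ -(2c/3)q_1 - 2c·q_2`
and `p_2 ↦ c·q_2` for some real `c ≠ 0`; in particular no such isomorphism maps both
`p_1` and `p_2` to nonnegative linear combinations of `q_1` and `q_2`. -/
theorem stmt17 :
    ∀ Φ : (P6 ⧸ idA) ≃ₐ[ℝ] (P6 ⧸ idB),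
      (∀ d : ℕ,
        Φ '' (Ideal.Quotient.mk idA '' {f : P6 | f.IsWeightedHomogeneous w6 d})
          = Ideal.Quotient.mk idB '' {f : P6 | f.IsWeightedHomogeneous w6 d}) →
      (∃ c : ℝ, c ≠ 0 ∧
          Φ (Ideal.Quotient.mk idA (X 0))
            = Ideal.Quotient.mk idB (C (-(2 * c / 3)) * X 0 + C (-(2 * c)) * X 1) ∧
          Φ (Ideal.Quotient.mk idA (X 1))
            = Ideal.Quotient.mk idB (C c * X 1))
      ∧
      ¬ ∃ d₁ d₂ e₁ e₂ : ℝ, 0 ≤ d₁ ∧ 0 ≤ d₂ ∧ 0 ≤ e₁ ∧ 0 ≤ e₂ ∧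
          Φ (Ideal.Quotient.mk idA (X 0))
            = Ideal.Quotient.mk idB (C d₁ * X 0 + C d₂ * X 1) ∧
          Φ (Ideal.Quotient.mk idA (X 1))
            = Ideal.Quotient.mk idB (C e₁ * X 0 + C e₂ * X 1) := by
  intro Φ hΦ
  have hm := main_part Φ hΦ
  refine ⟨hm, ?_⟩
  obtain ⟨c, hc, h0, h1⟩ := hm
  rintro ⟨d₁, d₂, e₁, e₂, k1, k2, k3, k4, g0, g1⟩
  have l0 := linB _ _ _ _ (h0.symm.trans g0)
  have h1' : Φ (Ideal.Quotient.mk idA (X 1))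
      = Ideal.Quotient.mk idB (C 0 * X 0 + C c * X 1) := by rw [h1]; simp
  have l1 := linB _ _ _ _ (h1'.symm.trans g1)
  apply hc
  linarith [l0.1, l1.2]
end
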